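/- arXiv:1308.0758 — 12 statements merged into one kernel-verified Lean document; each statement's English description precedes it below -/
import Mathlib

section
/- A ring R is right small dual if and only if r(l(T) ∩ Rb) = T + r(b) for every small right ideal T of R and every element b ∈ R. -/
open Pointwise

/-- The left annihilator `l(X) = {r : ∀ x ∈ X, r * x = 0}` of a subset of a ring. -/
def lAnn (R : Type*) [Ring R] (X : Set R) : Set R := {r : R | ∀ x ∈ X, r * x = 0}

/-- The right annihilator `r(X) = {r : ∀ x ∈ X, x * r = 0}` of a subset of a ring. -/
def rAnn (R : Type*) [Ring R] (X : Set R) : Set R := {r : R | ∀ x ∈ X, x * r = 0}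

/-- A right ideal of `R` (a submodule of `R` as a right `R`-module, i.e. an
`Rᵐᵒᵖ`-submodule) is small if `I + K ≠ R` for every proper right ideal `K`. -/
def IsSmallRightIdeal (R : Type*) [Ring R] (I : Submodule Rᵐᵒᵖ R) : Prop :=
  ∀ K : Submodule Rᵐᵒᵖ R, K ≠ ⊤ → I ⊔ K ≠ ⊤

/-- A left ideal of `R` is small if `I + K ≠ R` for every proper left ideal `K`. -/
def IsSmallLeftIdeal (R : Type*) [Ring R] (I : Ideal R) : Prop :=
  ∀ K : Ideal R, K ≠ ⊤ → I ⊔ K ≠ ⊤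

/-- `R` is right small dual if `rl(I) = I` for every small right ideal `I`. -/
def IsRightSmallDual (R : Type*) [Ring R] : Prop :=
  ∀ I : Submodule Rᵐᵒᵖ R, IsSmallRightIdeal R I → rAnn R (lAnn R (I : Set R)) = (I : Set R)

/-- `R` is left small dual if `lr(I) = I` for every small left ideal `I`. -/
def IsLeftSmallDual (R : Type*) [Ring R] : Prop :=
  ∀ I : Ideal R, IsSmallLeftIdeal R I → lAnn R (rAnn R (I : Set R)) = (I : Set R)

/-- `R` is right dual if `rl(I) = I` for every right ideal `I`. -/
def IsRightDual (R : Type*) [Ring R] : Prop :=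
  ∀ I : Submodule Rᵐᵒᵖ R, rAnn R (lAnn R (I : Set R)) = (I : Set R)

/-- `R` is left dual if `lr(I) = I` for every left ideal `I`. -/
def IsLeftDual (R : Type*) [Ring R] : Prop :=
  ∀ I : Ideal R, lAnn R (rAnn R (I : Set R)) = (I : Set R)

/-- A right `R`-module is torsionless if its nonzero elements are separated by
right `R`-linear maps to `R`. -/
def IsTorsionlessRight (R : Type*) [Ring R] (M : Type*) [AddCommGroup M] [Module Rᵐᵒᵖ M] : Prop :=
  ∀ m : M, m ≠ 0 → ∃ f : M →ₗ[Rᵐᵒᵖ] R, f m ≠ 0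

/-- The left annihilator of a subset, as a left ideal. -/
def lAnnIdeal (R : Type*) [Ring R] (X : Set R) : Ideal R where
  carrier := {r : R | ∀ x ∈ X, r * x = 0}
  add_mem' := fun {a b} ha hb x hx => by rw [add_mul, ha x hx, hb x hx, add_zero]
  zero_mem' := fun x _ => zero_mul x
  smul_mem' := fun c a ha x hx => by
    simp only [smul_eq_mul, Set.mem_setOf_eq] at *
    rw [mul_assoc, ha x hx, mul_zero]

/-- A right ideal `I` has a weak supplement if there is a right ideal `K` with
`I + K = R` and `I ∩ K` small. -/
def HasWeakSupplementRight (R : Type*) [Ring R] (I : Submodule Rᵐᵒᵖ R) : Prop :=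
  ∃ K : Submodule Rᵐᵒᵖ R, I ⊔ K = ⊤ ∧ IsSmallRightIdeal R (I ⊓ K)

/-- A left ideal `I` has a weak supplement if there is a left ideal `K` with
`I + K = R` and `I ∩ K` small. -/
def HasWeakSupplementLeft (R : Type*) [Ring R] (I : Ideal R) : Prop :=
  ∃ K : Ideal R, I ⊔ K = ⊤ ∧ IsSmallLeftIdeal R (I ⊓ K)

/-- `R` is semilocal if `R/J(R)` is a semisimple ring (equivalently, a semisimple
left `R`-module). -/
def IsSemilocalRing (R : Type*) [Ring R] : Prop :=
  IsSemisimpleModule R (R ⧸ Ideal.jacobson (⊥ : Ideal R))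

/-- `R` is semiperfect if it is semilocal and idempotents lift modulo `J(R)`. -/
def IsSemiperfectRing (R : Type*) [Ring R] : Prop :=
  IsSemilocalRing R ∧
    ∀ a : R, a * a - a ∈ Ideal.jacobson (⊥ : Ideal R) →
      ∃ e : R, e * e = e ∧ e - a ∈ Ideal.jacobson (⊥ : Ideal R)

/-- `R` is `J`-regular if `R/J(R)` is von Neumann regular. -/
def IsJRegular (R : Type*) [Ring R] : Prop :=
  ∀ a : R, ∃ b : R, a * b * a - a ∈ Ideal.jacobson (⊥ : Ideal R)

/-- `R` is left perfect: `R/J(R)` is semisimple and `J(R)` is left T-nilpotent. -/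
def IsLeftPerfect (R : Type*) [Ring R] : Prop :=
  IsSemilocalRing R ∧
    ∀ a : ℕ → R, (∀ i, a i ∈ Ideal.jacobson (⊥ : Ideal R)) →
      ∃ n : ℕ, (List.ofFn fun i : Fin (n + 1) => a i).prod = 0

/-- A right ideal `E` is essential if `E ∩ T ≠ 0` for every nonzero right ideal `T`. -/
def IsEssentialRightIdeal (R : Type*) [Ring R] (E : Submodule Rᵐᵒᵖ R) : Prop :=
  ∀ T : Submodule Rᵐᵒᵖ R, T ≠ ⊥ → E ⊓ T ≠ ⊥

/-- `R` is right small dual iff `r(l(T) ∩ Rb) = T + r(b)` for every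
small right ideal `T` and every `b ∈ R`. -/
theorem isRightSmallDual_iff_rAnn_inter (R : Type*) [Ring R] :
    IsRightSmallDual R ↔
      ∀ T : Submodule Rᵐᵒᵖ R, IsSmallRightIdeal R T → ∀ b : R,
        rAnn R (lAnn R (T : Set R) ∩ Set.range fun r : R => r * b) =
          (T : Set R) + rAnn R {b} := by
  constructor
  · intro h T hT b
    let f : R →ₗ[Rᵐᵒᵖ] R :=
      { toFun := fun x => b * x
        map_add' := fun x y => mul_add b x y
        map_smul' := fun c x => by simp [mul_assoc] }
    have hf : ∀ x, f x = b * x := fun _ => rfl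
    have hsmall : IsSmallRightIdeal R (T.map f) := by
      intro K hK hTK
      apply hK
      have h1 : T ⊔ K.comap f = ⊤ := by
        rw [eq_top_iff]
        intro x _
        have hx : f x ∈ T.map f ⊔ K := by rw [hTK]; trivial
        obtain ⟨y, ⟨t, ht, rfl⟩, k, hk, hyk⟩ := Submodule.mem_sup.1 hx
        refine Submodule.mem_sup.2 ⟨t, ht, x - t, ?_, by abel⟩
        rw [Submodule.mem_comap, map_sub, ← hyk, add_sub_cancel_left]
        exact hk
      have h2 : K.comap f = ⊤ := by
        by_contra hne
        exact hT _ hne h1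
      have h3 : T.map f ≤ K := by
        rw [Submodule.map_le_iff_le_comap, h2]
        exact le_top
      rw [← hTK]
      exact (sup_eq_right.2 h3).symm
    ext x
    constructor
    · intro hx
      have hbx : f x ∈ rAnn R (lAnn R ((T.map f : Submodule Rᵐᵒᵖ R) : Set R)) := by
        intro y hy
        rw [hf, ← mul_assoc]
        refine hx _ ⟨?_, y, rfl⟩
        intro t ht
        rw [mul_assoc]
        exact hy _ ⟨t, ht, rfl⟩
      rw [h _ hsmall] at hbx
      obtain ⟨t, ht, htx⟩ := hbx
      refine Set.mem_add.2 ⟨t, ht, x - t, ?_, by abel⟩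
      rintro _ rfl
      rw [hf, hf] at htx
      rw [mul_sub, htx, sub_self]
    · intro hx
      obtain ⟨t, ht, z, hz, rfl⟩ := Set.mem_add.1 hx
      rintro _ ⟨hy, r, rfl⟩
      have h1 := hy t ht
      have h2 : b * z = 0 := hz b rfl
      simp only at h1 ⊢
      rw [mul_add, h1, mul_assoc, h2, mul_zero, add_zero]
  · intro h T hT
    have h1 := h T hT 1
    have h2 : rAnn R {(1 : R)} = {0} := by
      ext x
      simp [rAnn]
    have h3 : (Set.range fun r : R => r * 1) = Set.univ := by
      ext x
      simp
    rw [h2, h3, Set.inter_univ] at h1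
    rw [h1]
    ext x
    simp
end

section
/- If R is a right small dual ring, then the left annihilator l(J) of the Jacobson radical J of R is an essential submodule of R viewed as a left R-module. -/
open Pointwise

theorem jac_left_inv (R : Type*) [Ring R] (j : R) (hj : j ∈ Ideal.jacobson (⊥ : Ideal R)) :
    ∃ z : R, z * (1 - j) = 1 := by
  obtain ⟨z, hz⟩ := Ideal.mem_jacobson_iff.1 hj (-1)
  refine ⟨z, ?_⟩
  rw [Ideal.mem_bot] at hz
  rw [← sub_eq_zero, ← hz]
  noncomm_ring

theorem jac_right_inv (R : Type*) [Ring R] (j : R) (hj : j ∈ Ideal.jacobson (⊥ : Ideal R)) :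
    ∃ z : R, (1 - j) * z = 1 := by
  obtain ⟨z, hz⟩ := jac_left_inv R j hj
  obtain ⟨w, hw⟩ := jac_left_inv R (-(z * j)) (neg_mem (Ideal.mul_mem_left _ z hj))
  have e : 1 - -(z * j) = z := by
    rw [sub_neg_eq_add, ← hz, mul_sub, mul_one, sub_add_cancel]
  rw [e] at hw
  have : w = 1 - j := by
    calc w = w * (z * (1 - j)) := by rw [hz, mul_one]
      _ = 1 - j := by rw [← mul_assoc, hw, one_mul]
  exact ⟨z, this ▸ hw⟩

/-- The right ideal `a J`. -/
def mulJac (R : Type*) [Ring R] (a : R) : Submodule Rᵐᵒᵖ R where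
  carrier := {x : R | ∃ j ∈ Ideal.jacobson (⊥ : Ideal R), x = a * j}
  add_mem' := by
    rintro _ _ ⟨i, hi, rfl⟩ ⟨j, hj, rfl⟩
    exact ⟨i + j, add_mem hi hj, (mul_add a i j).symm⟩
  zero_mem' := ⟨0, zero_mem _, (mul_zero a).symm⟩
  smul_mem' := by
    rintro c _ ⟨j, hj, rfl⟩
    exact ⟨j * c.unop, Ideal.mul_mem_right _ _ hj, by
      rw [MulOpposite.smul_eq_mul_unop, mul_assoc]⟩

theorem mulJac_small (R : Type*) [Ring R] (a : R) : IsSmallRightIdeal R (mulJac R a) := by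
  intro K hK htop
  apply hK
  have h1 : (1 : R) ∈ mulJac R a ⊔ K := by rw [htop]; trivial
  obtain ⟨_, ⟨j, hj, rfl⟩, k, hk, hjk⟩ := Submodule.mem_sup.1 h1
  obtain ⟨z, hz⟩ := jac_right_inv R (a * j) (Ideal.mul_mem_left _ a hj)
  have e : 1 - a * j = k := by rw [← hjk, add_sub_cancel_left]
  rw [e] at hz
  rw [eq_top_iff]
  intro x _
  have := K.smul_mem (MulOpposite.op (z * x)) hk
  rwa [MulOpposite.smul_eq_mul_unop, MulOpposite.unop_op, ← mul_assoc, hz, one_mul] at this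

/-- If `R` is right small dual, then `l(J)` is an essential submodule of
`R` as a left `R`-module, where `J` is the Jacobson radical. -/
theorem lAnn_jacobson_essential (R : Type*) [Ring R] (h : IsRightSmallDual R) :
    ∀ L : Ideal R, L ≠ ⊥ →
      lAnnIdeal R (Ideal.jacobson (⊥ : Ideal R) : Set R) ⊓ L ≠ ⊥ := by
  intro L hL hbot
  obtain ⟨a, haL, ha0⟩ := Submodule.exists_mem_ne_zero_of_ne_bot hL
  apply ha0
  have hmem : a ∈ rAnn R (lAnn R (mulJac R a : Set R)) := by
    intro r hr
    have : r * a ∈ lAnnIdeal R (Ideal.jacobson (⊥ : Ideal R) : Set R) ⊓ L := by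
      refine ⟨fun j hj => ?_, L.mul_mem_left r haL⟩
      rw [mul_assoc]
      exact hr _ ⟨j, hj, rfl⟩
    rw [hbot] at this
    exact this
  rw [h _ (mulJac_small R a)] at hmem
  obtain ⟨j, hj, e⟩ := hmem
  obtain ⟨z, hz⟩ := jac_right_inv R j hj
  calc a = a * ((1 - j) * z) := by rw [hz, mul_one]
    _ = (a - a * j) * z := by rw [← mul_assoc, mul_sub, mul_one]
    _ = 0 := by rw [← e, sub_self, zero_mul]
end

section
/- If R is a right small dual ring, then rl(T) = T for every finitely generated semisimple right ideal T of R (i.e., every right ideal that is a finite sum of minimal right ideals). -/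
open Pointwise

theorem rsd_small_sup {R : Type*} [Ring R] {A B : Submodule Rᵐᵒᵖ R}
    (hA : IsSmallRightIdeal R A) (hB : IsSmallRightIdeal R B) : IsSmallRightIdeal R (A ⊔ B) := by
  intro K hK
  rw [sup_assoc]
  exact hA _ (hB K hK)

theorem rsd_small_finset {R : Type*} [Ring R] {ι : Type*} (s : Finset ι)
    (f : ι → Submodule Rᵐᵒᵖ R) (hf : ∀ i ∈ s, IsSmallRightIdeal R (f i)) :
    IsSmallRightIdeal R (s.sup f) := by
  classical
  induction s using Finset.induction_on with
  | empty =>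
    intro K hK
    simpa using hK
  | insert a s _ ih =>
    rw [Finset.sup_insert]
    exact rsd_small_sup (hf a (by simp)) (ih fun i hi => hf i (by simp [hi]))

theorem rsd_mul_mem {R : Type*} [Ring R] (A : Submodule Rᵐᵒᵖ R) {a : R} (ha : a ∈ A) (r : R) :
    a * r ∈ A := by
  simpa using A.smul_mem (MulOpposite.op r) ha

/-- Left multiplication as a right-linear map. -/
def rsdMul {R : Type*} [Ring R] (c : R) : R →ₗ[Rᵐᵒᵖ] R where
  toFun x := c * x
  map_add' x y := mul_add c x y
  map_smul' r x := by simp [mul_assoc]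

theorem rsd_idem {R : Type*} [Ring R] (A : Submodule Rᵐᵒᵖ R)
    (hA : ∀ B, B ≤ A → B = ⊥ ∨ B = A) (hs : ¬ IsSmallRightIdeal R A) :
    ∃ e ∈ A, ∀ a ∈ A, e * a = a := by
  unfold IsSmallRightIdeal at hs
  push Not at hs
  obtain ⟨K, hK, hAK⟩ := hs
  have hb : A ⊓ K = ⊥ := by
    rcases hA _ (inf_le_left : A ⊓ K ≤ A) with h | h
    · exact h
    · exact absurd (by rwa [sup_eq_right.mpr (inf_eq_left.mp h)] at hAK) hK
  have h1 : (1 : R) ∈ A ⊔ K := by rw [hAK]; trivial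
  obtain ⟨e, he, k, hk, hek⟩ := Submodule.mem_sup.mp h1
  refine ⟨e, he, fun a ha => ?_⟩
  have hka : k * a ∈ A ⊓ K := by
    refine ⟨?_, rsd_mul_mem K hk a⟩
    have : k * a = a - e * a := by rw [eq_sub_iff_add_eq', ← add_mul, hek, one_mul]
    rw [this]
    exact A.sub_mem ha (rsd_mul_mem A he a)
  rw [hb, Submodule.mem_bot] at hka
  calc e * a = (e + k) * a := by rw [add_mul, hka, add_zero]
    _ = a := by rw [hek, one_mul]

theorem rsd_map {R : Type*} [Ring R] (A : Submodule Rᵐᵒᵖ R) (φ : R →ₗ[Rᵐᵒᵖ] R)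
    (hA : ∀ B, B ≤ A → B = ⊥ ∨ B = A) : ∀ B, B ≤ A.map φ → B = ⊥ ∨ B = A.map φ := by
  intro B hB
  have hm : (A ⊓ B.comap φ).map φ = B := by
    apply le_antisymm
    · rw [Submodule.map_le_iff_le_comap]; exact inf_le_right
    · intro y hy
      obtain ⟨a, ha, rfl⟩ := hB hy
      exact ⟨a, ⟨ha, hy⟩, rfl⟩
  rcases hA _ (inf_le_left : A ⊓ B.comap φ ≤ A) with h | h
  · left; rw [← hm, h, Submodule.map_bot]
  · right; rw [h] at hm; exact hm.symm

theorem rsd_main {R : Type*} [Ring R] (h : IsRightSmallDual R) {ι : Type*} (n : ℕ) :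
    ∀ (s : Finset ι) (f : ι → Submodule Rᵐᵒᵖ R), s.card = n →
      (∀ i ∈ s, ∀ B, B ≤ f i → B = ⊥ ∨ B = f i) →
      ∀ x ∈ rAnn R (lAnn R ((s.sup f : Submodule Rᵐᵒᵖ R) : Set R)), x ∈ s.sup f := by
  classical
  induction n with
  | zero =>
    intro s f hs hf x hx
    have := h (s.sup f) (by
      rw [Finset.card_eq_zero.mp hs]
      intro K hK
      simpa using hK)
    rw [this] at hx
    exact hx
  | succ n ih =>
    intro s f hs hf x hx
    by_cases hsm : ∀ i ∈ s, IsSmallRightIdeal R (f i)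
    · rw [h _ (rsd_small_finset s f hsm)] at hx
      exact hx
    push Not at hsm
    obtain ⟨i, hi, hns⟩ := hsm
    obtain ⟨e, he, hea⟩ := rsd_idem (f i) (hf i hi) hns
    have heT : e ∈ s.sup f := (Finset.le_sup hi : f i ≤ s.sup f) he
    have hS : (s.sup f).map (rsdMul (1 - e)) =
        (s.erase i).sup (fun j => (f j).map (rsdMul (1 - e))) := by
      conv_lhs => rw [← Finset.insert_erase hi, Finset.sup_insert, Submodule.map_sup]
      have h0 : (f i).map (rsdMul (1 - e)) = ⊥ := by
        rw [eq_bot_iff]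
        rintro _ ⟨a, ha, rfl⟩
        simp [rsdMul, sub_mul, hea a ha]
      rw [h0, bot_sup_eq]
      exact Finset.apply_sup_eq_sup_comp (Submodule.map (rsdMul (1 - e)))
        (fun a b => Submodule.map_sup a b _) (Submodule.map_bot _)
    have key := ih (s.erase i) (fun j => (f j).map (rsdMul (1 - e)))
      (by rw [Finset.card_erase_of_mem hi, hs]; rfl)
      (fun j hj => rsd_map _ _ (hf j (Finset.mem_of_mem_erase hj))) ((1 - e) * x) (by
        rw [← hS]
        intro r hr
        rw [← mul_assoc]
        apply hx
        intro t ht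
        rw [mul_assoc]
        exact hr _ ⟨t, ht, rfl⟩)
    rw [← hS] at key
    obtain ⟨t, ht, hte⟩ := key
    have hte' : (1 - e) * t = (1 - e) * x := hte
    have hx' : x = t - e * t + e * x := by
      rw [sub_mul, sub_mul, one_mul, one_mul] at hte'
      rw [hte']; abel
    rw [hx']
    exact add_mem (sub_mem ht (rsd_mul_mem _ heT t)) (rsd_mul_mem _ heT x)

/-- If `R` is right small dual, then `rl(T) = T` for every finitely
generated semisimple right ideal `T` (a finite sum of minimal right ideals). -/
theorem rAnn_lAnn_of_fg_semisimple (R : Type*) [Ring R] (h : IsRightSmallDual R)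
    (T : Submodule Rᵐᵒᵖ R)
    (hT : ∃ (n : ℕ) (f : Fin n → Submodule Rᵐᵒᵖ R), (∀ i, IsAtom (f i)) ∧ T = ⨆ i, f i) :
    rAnn R (lAnn R (T : Set R)) = (T : Set R) := by
  obtain ⟨n, f, hf, rfl⟩ := hT
  apply Set.Subset.antisymm
  · intro x hx
    rw [← Finset.sup_univ_eq_iSup] at hx ⊢
    exact rsd_main h _ Finset.univ f rfl (fun i _ B hB => (hf i).le_iff.mp hB) x hx
  · intro x hx r hr
    exact hr x hx
end

section
/- Let R be a right small dual ring. Then every left R-linear map from a small principal left ideal Rt of R to R is given by right multiplication by some element c ∈ R; in particular, R is left mininjective. -/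
open Pointwise

theorem small_left_inv {R : Type*} [Ring R] {t : R} (ht : IsSmallLeftIdeal R (Ideal.span {t}))
    (a : R) : ∃ u : R, u * (1 - a * t) = 1 := by
  have h1 : Ideal.span {1 - a * t} = (⊤ : Ideal R) := by
    by_contra hne
    apply ht _ hne
    rw [Ideal.eq_top_iff_one]
    have h2 : a * t ∈ Ideal.span {t} ⊔ Ideal.span {1 - a * t} :=
      Submodule.mem_sup_left (Ideal.mul_mem_left _ a (Ideal.mem_span_singleton_self t))
    have h3 : 1 - a * t ∈ Ideal.span {t} ⊔ Ideal.span {1 - a * t} :=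
      Submodule.mem_sup_right (Ideal.mem_span_singleton_self _)
    simpa using add_mem h2 h3
  exact Ideal.mem_span_singleton'.1 ((Ideal.eq_top_iff_one _).1 h1)

theorem small_right_of_left {R : Type*} [Ring R] {t : R}
    (ht : IsSmallLeftIdeal R (Ideal.span {t})) :
    IsSmallRightIdeal R (Submodule.span Rᵐᵒᵖ {t}) := by
  intro K hK hsup
  apply hK
  have h1 : (1 : R) ∈ Submodule.span Rᵐᵒᵖ {t} ⊔ K := hsup ▸ Submodule.mem_top
  obtain ⟨y, hy, k, hk, hyk⟩ := Submodule.mem_sup.1 h1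
  obtain ⟨a', rfl⟩ := Submodule.mem_span_singleton.1 hy
  obtain ⟨a, rfl⟩ := MulOpposite.op_surjective a'
  rw [op_smul_eq_mul] at hyk
  obtain ⟨u, hu⟩ := small_left_inv ht a
  obtain ⟨v, hv⟩ := small_left_inv ht (-(u * a))
  have hu' : 1 - -(u * a) * t = u := by
    have : u - u * (a * t) = 1 := by rw [← hu]; noncomm_ring
    rw [← this]; noncomm_ring
  rw [hu'] at hv
  have hvw : v = 1 - a * t := left_inv_eq_right_inv hv hu
  rw [hvw] at hv
  have hk' : k = 1 - t * a := by rw [← hyk]; noncomm_ring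
  have h2 : k * (1 + t * u * a) = 1 := by
    have : k * (1 + t * u * a) = 1 - t * a + t * ((1 - a * t) * u) * a := by
      rw [hk']; noncomm_ring
    rw [this, hv]; noncomm_ring
  rw [eq_top_iff]
  intro x _
  have h3 := K.smul_mem (MulOpposite.op ((1 + t * u * a) * x)) hk
  rwa [op_smul_eq_mul, ← mul_assoc, h2, one_mul] at h3

theorem small_principal_maps {R : Type*} [Ring R] (h : IsRightSmallDual R) (t : R)
    (ht : IsSmallLeftIdeal R (Ideal.span {t})) (f : (Ideal.span {t} : Ideal R) →ₗ[R] R) :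
    ∃ c : R, ∀ x : (Ideal.span {t} : Ideal R), f x = (x : R) * c := by
  let t' : (Ideal.span {t} : Ideal R) := ⟨t, Ideal.mem_span_singleton_self t⟩
  have hmem : f t' ∈ rAnn R (lAnn R (Submodule.span Rᵐᵒᵖ {t} : Set R)) := by
    intro r hr
    have h0 : r * t = 0 := hr t (Submodule.mem_span_singleton_self t)
    have h1 : r • t' = 0 := Subtype.ext h0
    rw [← smul_eq_mul, ← map_smul, h1, map_zero]
  rw [h _ (small_right_of_left ht)] at hmem
  obtain ⟨c, hc⟩ := Submodule.mem_span_singleton.1 hmem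
  obtain ⟨c, rfl⟩ := MulOpposite.op_surjective c
  rw [op_smul_eq_mul] at hc
  refine ⟨c, ?_⟩
  rintro ⟨x, hx⟩
  obtain ⟨r, rfl⟩ := Ideal.mem_span_singleton'.1 hx
  have h2 : (⟨r * t, hx⟩ : (Ideal.span {t} : Ideal R)) = r • t' := rfl
  rw [h2, map_smul, ← hc, smul_eq_mul, ← mul_assoc]
  rfl

/-- If `R` is right small dual, then every left `R`-linear map from a
small principal left ideal `Rt` to `R` is right multiplication by some `c ∈ R`; in
particular `R` is left mininjective (the same holds for maps from minimal left ideals). -/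
theorem smallPrincipal_maps_are_mul_and_left_mininjective (R : Type*) [Ring R]
    (h : IsRightSmallDual R) :
    (∀ t : R, IsSmallLeftIdeal R (Ideal.span {t}) →
      ∀ f : (Ideal.span {t} : Ideal R) →ₗ[R] R,
        ∃ c : R, ∀ x : (Ideal.span {t} : Ideal R), f x = (x : R) * c) ∧
    (∀ I : Ideal R, IsAtom I →
      ∀ f : I →ₗ[R] R, ∃ c : R, ∀ x : I, f x = (x : R) * c) := by
  refine ⟨small_principal_maps h, ?_⟩
  intro I hI f
  by_cases hs : IsSmallLeftIdeal R I
  · obtain ⟨t, htI, ht0⟩ := Submodule.exists_mem_ne_zero_of_ne_bot hI.1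
    have hle : Ideal.span {t} ≤ I := (Ideal.span_singleton_le_iff_mem I).2 htI
    have hIt : I = Ideal.span {t} := by
      rcases hI.le_iff.1 hle with h0 | h0
      · exact absurd (Ideal.span_singleton_eq_bot.1 h0) ht0
      · exact h0.symm
    subst hIt
    exact small_principal_maps h t hs f
  · unfold IsSmallLeftIdeal at hs
    push Not at hs
    obtain ⟨K, hK, hsup⟩ := hs
    have hinf : I ⊓ K = ⊥ := by
      rcases hI.le_iff.1 (inf_le_left : I ⊓ K ≤ I) with h0 | h0
      · exact h0
      · exact absurd ((sup_eq_right.2 (inf_eq_left.1 h0)).symm.trans hsup) hK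
    obtain ⟨e, he, k, hk, hek⟩ := Submodule.mem_sup.1 ((Ideal.eq_top_iff_one _).1 hsup)
    refine ⟨f ⟨e, he⟩, ?_⟩
    rintro ⟨x, hx⟩
    have hxk : x * k = x - x * e := by
      rw [eq_sub_iff_add_eq', ← mul_add, hek, mul_one]
    have h0 : x * k ∈ I ⊓ K :=
      ⟨by rw [hxk]; exact sub_mem hx (I.mul_mem_left x he), K.mul_mem_left x hk⟩
    rw [hinf, Submodule.mem_bot, hxk, sub_eq_zero] at h0
    have h1 : (⟨x, hx⟩ : I) = x • ⟨e, he⟩ := Subtype.ext h0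
    rw [h1, map_smul, ← h1, smul_eq_mul]
end

section
/- Let R be a right small dual ring and e an idempotent of R such that ReR = R (the two-sided ideal generated by e is all of R). Then the corner ring eRe is also a right small dual ring. -/
open Pointwise

/-- The corner `eRe` of a ring: for an idempotent `e`, the elements `x` with
`e * x = x` and `x * e = x`. -/
def Corner (R : Type*) [Ring R] (e : R) : Type _ := {x : R // e * x = x ∧ x * e = x}

section Corner

variable {R : Type*} [Ring R] {e : R}

instance : Add (Corner R e) :=
  ⟨fun x y => ⟨x.1 + y.1, by rw [mul_add, x.2.1, y.2.1], by rw [add_mul, x.2.2, y.2.2]⟩⟩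

instance : Zero (Corner R e) := ⟨⟨0, by rw [mul_zero], by rw [zero_mul]⟩⟩

instance : Neg (Corner R e) :=
  ⟨fun x => ⟨-x.1, by rw [mul_neg, x.2.1], by rw [neg_mul, x.2.2]⟩⟩

instance : Mul (Corner R e) :=
  ⟨fun x y => ⟨x.1 * y.1, by rw [← mul_assoc, x.2.1], by rw [mul_assoc, y.2.2]⟩⟩

/-- The ring structure on the corner `eRe` determined by an idempotent `e`,
with identity element `e`. -/
def cornerRing (he : e * e = e) : Ring (Corner R e) where
  add := (· + ·)
  add_assoc a b c := Subtype.ext (add_assoc a.1 b.1 c.1)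
  zero := 0
  zero_add a := Subtype.ext (zero_add a.1)
  add_zero a := Subtype.ext (add_zero a.1)
  nsmul := nsmulRec
  zsmul := zsmulRec
  neg := Neg.neg
  neg_add_cancel a := Subtype.ext (neg_add_cancel a.1)
  add_comm a b := Subtype.ext (add_comm a.1 b.1)
  mul := (· * ·)
  left_distrib a b c := Subtype.ext (left_distrib a.1 b.1 c.1)
  right_distrib a b c := Subtype.ext (right_distrib a.1 b.1 c.1)
  zero_mul a := Subtype.ext (zero_mul a.1)
  mul_zero a := Subtype.ext (mul_zero a.1)
  mul_assoc a b c := Subtype.ext (mul_assoc a.1 b.1 c.1)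
  one := ⟨e, he, he⟩
  one_mul a := Subtype.ext a.2.1
  mul_one a := Subtype.ext a.2.2

end Corner

/-- If `R` is right small dual and `e` is an idempotent with `ReR = R`
(the ideal generated by `eR` is all of `R`), then the corner ring `eRe` is also
right small dual. -/
theorem corner_isRightSmallDual (R : Type*) [Ring R] (e : R) (he : e * e = e)
    (hgen : Ideal.span (Set.range fun r : R => e * r) = (⊤ : Ideal R))
    (h : IsRightSmallDual R) :
    @IsRightSmallDual (Corner R e) (cornerRing he) := by
  letI := cornerRing he
  intro I hI
  -- the right ideal of `R` corresponding to `I`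
  let T : Submodule Rᵐᵒᵖ R :=
    { carrier := {x | e * x = x ∧ ∀ r, ∃ y ∈ I, y.1 = x * r * e}
      add_mem' := by
        rintro a b ⟨ha, ha'⟩ ⟨hb, hb'⟩
        refine ⟨by rw [mul_add, ha, hb], fun r => ?_⟩
        obtain ⟨y, hy, hy'⟩ := ha' r
        obtain ⟨z, hz, hz'⟩ := hb' r
        refine ⟨y + z, I.add_mem hy hz, ?_⟩
        change y.1 + z.1 = _
        rw [hy', hz', add_mul, add_mul]
      zero_mem' := by
        refine ⟨mul_zero _, fun r => ⟨0, I.zero_mem, ?_⟩⟩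
        change (0 : R) = _
        rw [zero_mul, zero_mul]
      smul_mem' := by
        rintro c x ⟨hx, hx'⟩
        refine ⟨?_, fun r => ?_⟩
        · change e * (x * c.unop) = x * c.unop
          rw [← mul_assoc, hx]
        · obtain ⟨y, hy, hy'⟩ := hx' (c.unop * r)
          refine ⟨y, hy, ?_⟩
          change y.1 = x * c.unop * r * e
          rw [hy', ← mul_assoc x] }
  have hIT : ∀ y ∈ I, y.1 ∈ T := by
    intro y hy
    refine ⟨y.2.1, fun r => ?_⟩
    let s : Corner R e := ⟨e * r * e, by rw [← mul_assoc, ← mul_assoc, he], by rw [mul_assoc, he]⟩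
    refine ⟨y * s, I.smul_mem (MulOpposite.op s) hy, ?_⟩
    change y.1 * (e * r * e) = _
    rw [← mul_assoc, ← mul_assoc, y.2.2]
  have hTsmall : IsSmallRightIdeal R T := by
    intro K hK htop
    apply hK
    have heK : e ∈ K := by
      let L : Submodule (Corner R e)ᵐᵒᵖ (Corner R e) :=
        { carrier := {x | x.1 ∈ K}
          add_mem' := fun {a b} ha hb => K.add_mem ha hb
          zero_mem' := K.zero_mem
          smul_mem' := fun c x hx => K.smul_mem (MulOpposite.op c.unop.1) hx }
      have hL : I ⊔ L = ⊤ := by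
        rw [eq_top_iff]
        rintro x -
        have hx : x.1 ∈ T ⊔ K := htop ▸ Submodule.mem_top
        obtain ⟨t, ht, k, hk, htk⟩ := Submodule.mem_sup.1 hx
        obtain ⟨y, hy, hy'⟩ := ht.2 1
        rw [mul_one] at hy'
        have hek : e * k = k := by
          have h1 : k = x.1 - t := by rw [← htk]; abel
          rw [h1, mul_sub, x.2.1, ht.1]
        let k' : Corner R e := ⟨k * e, by rw [← mul_assoc, hek], by rw [mul_assoc, he]⟩
        refine Submodule.mem_sup.2 ⟨y, hy, k', K.smul_mem (MulOpposite.op e) hk, ?_⟩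
        apply Subtype.ext
        change y.1 + k * e = x.1
        rw [hy', ← add_mul, htk, x.2.2]
      have hLtop : L = ⊤ := by
        by_contra hne
        exact hI L hne hL
      have : (1 : Corner R e) ∈ L := hLtop ▸ Submodule.mem_top
      exact this
    have hTK : T ≤ K := by
      intro t ht
      rw [← ht.1]
      exact K.smul_mem (MulOpposite.op t) heK
    rwa [sup_eq_right.2 hTK] at htop
  have hT := h T hTsmall
  apply Set.Subset.antisymm
  · intro a ha
    have haT : a.1 ∈ rAnn R (lAnn R (T : Set R)) := by
      intro x hx
      have key : ∀ r, e * r * (x * a.1) = 0 := by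
        intro r
        let s : Corner R e :=
          ⟨e * r * x * e, by simp only [← mul_assoc, he], by rw [mul_assoc, he]⟩
        have hs : s ∈ lAnn (Corner R e) (I : Set (Corner R e)) := by
          intro y hy
          apply Subtype.ext
          change e * r * x * e * y.1 = 0
          rw [mul_assoc, y.2.1, mul_assoc, hx _ (hIT y hy), mul_zero]
        have h2 : e * r * x * e * a.1 = 0 := congrArg Subtype.val (ha s hs)
        rwa [mul_assoc, a.2.1, mul_assoc] at h2
      have hle : Ideal.span (Set.range fun r : R => e * r) ≤ lAnnIdeal R {x * a.1} := by
        rw [Ideal.span_le]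
        rintro _ ⟨r, rfl⟩ z hz
        rw [Set.mem_singleton_iff.1 hz]
        exact key r
      rw [hgen] at hle
      have h1 : (1 : R) * (x * a.1) = 0 := hle (Submodule.mem_top : (1 : R) ∈ ⊤) _ rfl
      rwa [one_mul] at h1
    rw [hT] at haT
    obtain ⟨y, hy, hy'⟩ := haT.2 1
    rw [mul_one, a.2.2] at hy'
    have : y = a := Subtype.ext hy'
    exact this ▸ hy
  · intro a ha x hx
    exact hx a ha
end

section
/- For a ring R with Jacobson radical J and an integer n ≥ 1, the following are equivalent: (1) the matrix ring M_n(R) is right small dual; (2) for every right R-submodule K of the column module R_n with K ⊆ J_n, the right R-module R_n/K is torsionless; (3) for every right R-submodule K ⊆ J_n of R_n and every b ∈ R_n, the inclusion l_{R^n}(K) ⊆ l_{R^n}(b) implies b ∈ K; (4) for every right R-submodule K ⊆ J_n of R_n, r_{R_n}(l_{R^n}(K)) = K. -/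
open Pointwise

theorem jac_unit {S : Type*} [Ring S] {x : S} (hx : x ∈ Ideal.jacobson (⊥ : Ideal S)) :
    ∃ z, (1 - x) * z = 1 := by
  rw [Ideal.mem_jacobson_iff] at hx
  obtain ⟨z, hz⟩ := hx (-1)
  obtain ⟨w, hw⟩ := hx z
  rw [Submodule.mem_bot] at hz hw
  have h1 : z * (1 - x) = 1 := by
    rw [← sub_eq_zero, ← hz]; noncomm_ring
  have h2 : z = 1 + z * x := by
    rw [mul_sub, mul_one, sub_eq_iff_eq_add] at h1; exact h1
  have h3 : w * z = 1 := by
    rw [← sub_eq_zero, ← hw]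
    conv_lhs => rw [h2]
    noncomm_ring
  have h4 : w = 1 - x := left_inv_eq_right_inv h3 h1
  exact ⟨z, h4 ▸ h3⟩

theorem small_of_jac {S : Type*} [Ring S] (I : Submodule Sᵐᵒᵖ S)
    (h : ∀ x ∈ I, x ∈ Ideal.jacobson (⊥ : Ideal S)) : IsSmallRightIdeal S I := by
  intro K hK hIK
  apply hK
  have h1 : (1 : S) ∈ I ⊔ K := by rw [hIK]; trivial
  obtain ⟨x, hx, k, hk, hxk⟩ := Submodule.mem_sup.1 h1
  obtain ⟨z, hz⟩ := jac_unit (h x hx)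
  have hk' : 1 - x = k := by rw [← hxk]; abel
  rw [hk'] at hz
  rw [eq_top_iff]
  intro s _
  have := K.smul_mem (MulOpposite.op (z * s)) hk
  rwa [op_smul_eq_mul, ← mul_assoc, hz, one_mul] at this

theorem jac_of_small {S : Type*} [Ring S] (I : Submodule Sᵐᵒᵖ S)
    (h : IsSmallRightIdeal S I) : ∀ x ∈ I, x ∈ Ideal.jacobson (⊥ : Ideal S) := by
  intro x hx
  have key : ∀ y, ∃ u, (1 + x * y) * u = 1 := by
    intro y
    by_contra hc
    push Not at hc
    refine h (Submodule.span Sᵐᵒᵖ {1 + x * y}) ?_ ?_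
    · intro ht
      have h1 : (1 : S) ∈ Submodule.span Sᵐᵒᵖ {1 + x * y} := by rw [ht]; trivial
      obtain ⟨a, ha⟩ := Submodule.mem_span_singleton.1 h1
      exact hc a.unop ha
    · rw [eq_top_iff]
      intro s _
      refine Submodule.mem_sup.2 ⟨-(x * (y * s)), I.neg_mem ?_, (1 + x * y) * s, ?_, ?_⟩
      · exact I.smul_mem (MulOpposite.op (y * s)) hx
      · exact Submodule.smul_mem _ (MulOpposite.op s) (Submodule.mem_span_singleton_self _)
      · noncomm_ring
  rw [Ideal.mem_jacobson_iff]
  intro y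
  obtain ⟨u, hu⟩ := key y
  obtain ⟨v, hv⟩ := key (-(y * u))
  have h2 : 1 + x * -(y * u) = u := by
    have : u = 1 - x * y * u := by rw [← hu]; noncomm_ring
    conv_rhs => rw [this]
    noncomm_ring
  rw [h2] at hv
  have h3 : u * (1 + x * y) = 1 := by
    rw [left_inv_eq_right_inv hu hv]; exact hv
  refine ⟨1 - y * u * x, ?_⟩
  rw [Submodule.mem_bot]
  have : (1 - y * u * x) * y * x + (1 - y * u * x) - 1 = y * (1 - u * (1 + x * y)) * x := by
    noncomm_ring
  rw [this, h3]; simp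

theorem mem_jac_matrix {R : Type*} [Ring R] {n : ℕ} (A : Matrix (Fin n) (Fin n) R) :
    A ∈ Ideal.jacobson (⊥ : Ideal (Matrix (Fin n) (Fin n) R)) ↔
      ∀ i j, A i j ∈ Ideal.jacobson (⊥ : Ideal R) := by
  have h1 : A ∈ (⊥ : TwoSidedIdeal (Matrix (Fin n) (Fin n) R)).jacobson ↔
      ∀ i j, A i j ∈ (⊥ : TwoSidedIdeal R).jacobson := by
    rw [← TwoSidedIdeal.matrix_jacobson_bot]; rfl
  simpa only [TwoSidedIdeal.mem_jacobson_iff, Ideal.mem_jacobson_iff, TwoSidedIdeal.mem_bot,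
    Submodule.mem_bot] using h1

/-- matrices all of whose columns lie in `K`. -/
def colIdeal {R : Type*} [Ring R] {n : ℕ} (K : Submodule Rᵐᵒᵖ (Fin n → R)) :
    Submodule (Matrix (Fin n) (Fin n) R)ᵐᵒᵖ (Matrix (Fin n) (Fin n) R) where
  carrier := {A | ∀ j, (fun i => A i j) ∈ K}
  add_mem' := fun ha hb j => K.add_mem (ha j) (hb j)
  zero_mem' := fun _ => K.zero_mem
  smul_mem' := fun c A hA j => by
    have : (fun i => (c • A) i j) = ∑ k, MulOpposite.op (c.unop k j) • (fun i => A i k) := by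
      ext i
      simp [Finset.sum_apply, Matrix.mul_apply, MulOpposite.smul_eq_mul_unop]
    rw [this]
    exact K.sum_mem fun k _ => K.smul_mem _ (hA k)

/-- matrix all of whose columns equal `b`. -/
def rep {R : Type*} [Ring R] {n : ℕ} (b : Fin n → R) : Matrix (Fin n) (Fin n) R :=
  Matrix.of fun i _ => b i

/-- columns `b` such that `rep b ∈ I`. -/
def colSub {R : Type*} [Ring R] {n : ℕ}
    (I : Submodule (Matrix (Fin n) (Fin n) R)ᵐᵒᵖ (Matrix (Fin n) (Fin n) R)) :
    Submodule Rᵐᵒᵖ (Fin n → R) where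
  carrier := {b | rep b ∈ I}
  add_mem' := fun ha hb => I.add_mem ha hb
  zero_mem' := I.zero_mem
  smul_mem' := fun c b hb => by
    have := I.smul_mem (MulOpposite.op (Matrix.diagonal fun _ : Fin n => c.unop)) hb
    have h2 : rep (c • b) = MulOpposite.op (Matrix.diagonal fun _ : Fin n => c.unop) • rep b := by
      ext i j
      simp [rep, MulOpposite.smul_eq_mul_unop]
    exact (h2 ▸ this : rep (c • b) ∈ I)

theorem mem_iff_cols {R : Type*} [Ring R] {n : ℕ}
    (I : Submodule (Matrix (Fin n) (Fin n) R)ᵐᵒᵖ (Matrix (Fin n) (Fin n) R))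
    (A : Matrix (Fin n) (Fin n) R) : A ∈ I ↔ ∀ j, (fun i => A i j) ∈ colSub I := by
  constructor
  · intro hA j
    have := I.smul_mem (MulOpposite.op (Matrix.of fun (k _ : Fin n) => if k = j then (1 : R) else 0)) hA
    have h2 : rep (fun i => A i j) =
        MulOpposite.op (Matrix.of fun (k _ : Fin n) => if k = j then (1 : R) else 0) • A := by
      ext i l
      simp [rep, Matrix.mul_apply]
    exact (h2 ▸ this : rep (fun i => A i j) ∈ I)
  · intro h
    have h2 : A = ∑ j, MulOpposite.op (Matrix.diagonal fun k => if k = j then (1 : R) else 0) •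
        rep (fun i => A i j) := by
      ext i j
      simp [rep, Matrix.sum_apply]
    rw [h2]
    exact I.sum_mem fun j _ => I.smul_mem _ (h j)

open Ideal in
/-- equivalent characterizations of right small duality of the matrix
ring `Mₙ(R)` in terms of `n`-generated right `R`-modules `Rₙ/K` with `K ⊆ Jₙ`. -/
theorem matrix_isRightSmallDual_tfae (R : Type*) [Ring R] (n : ℕ) (hn : 1 ≤ n) :
    [ IsRightSmallDual (Matrix (Fin n) (Fin n) R),
      ∀ K : Submodule Rᵐᵒᵖ (Fin n → R),
        (∀ b ∈ K, ∀ i, b i ∈ jacobson (⊥ : Ideal R)) →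
          IsTorsionlessRight R ((Fin n → R) ⧸ K),
      ∀ K : Submodule Rᵐᵒᵖ (Fin n → R),
        (∀ b ∈ K, ∀ i, b i ∈ jacobson (⊥ : Ideal R)) →
          ∀ b : Fin n → R,
            {c : Fin n → R | ∀ x ∈ K, ∑ i, c i * x i = 0} ⊆
                {c : Fin n → R | ∑ i, c i * b i = 0} →
              b ∈ K,
      ∀ K : Submodule Rᵐᵒᵖ (Fin n → R),
        (∀ b ∈ K, ∀ i, b i ∈ jacobson (⊥ : Ideal R)) →
          {b : Fin n → R |
              ∀ c : Fin n → R, (∀ x ∈ K, ∑ i, c i * x i = 0) → ∑ i, c i * b i = 0} =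
            (K : Set (Fin n → R)) ].TFAE := by
  tfae_have 3 ↔ 4 := by
    refine forall_congr' fun K => forall_congr' fun _ => ?_
    constructor
    · intro h
      ext b
      exact ⟨fun hb => h b fun c hc => hb c hc, fun hb c hc => hc b hb⟩
    · intro h b hb
      have : b ∈ (K : Set (Fin n → R)) := by
        rw [← h]
        exact fun c hc => hb hc
      exact this
  tfae_have 2 → 3 := by
    intro h K hK b hb
    by_contra hbK
    obtain ⟨f, hf⟩ := h K hK (Submodule.Quotient.mk b)
      (fun h0 => hbK ((Submodule.Quotient.mk_eq_zero K).1 h0))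
    have key : ∀ x : Fin n → R, f (Submodule.Quotient.mk x) =
        ∑ i, f (Submodule.Quotient.mk (Pi.single i 1)) * x i := by
      intro x
      have hx : x = ∑ i, MulOpposite.op (x i) • (Pi.single i (1 : R) : Fin n → R) := by
        ext j
        simp [Finset.sum_apply, Pi.single_apply]
      have := congrArg (fun y => f (K.mkQ y)) hx
      simp only [map_sum, map_smul] at this
      simpa using this
    apply hf
    rw [key]
    refine hb (a := fun i => f (Submodule.Quotient.mk (Pi.single i 1))) ?_
    intro x hx
    rw [← key, (Submodule.Quotient.mk_eq_zero K).2 hx, map_zero]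
  tfae_have 3 → 2 := by
    intro h K hK m hm
    obtain ⟨b, rfl⟩ := Submodule.Quotient.mk_surjective K m
    have hbK : b ∉ K := fun h0 => hm ((Submodule.Quotient.mk_eq_zero K).2 h0)
    have h1 := mt (h K hK b) hbK
    rw [Set.not_subset] at h1
    obtain ⟨c, hc, hcb⟩ := h1
    let g : (Fin n → R) →ₗ[Rᵐᵒᵖ] R :=
      { toFun := fun x => ∑ i, c i * x i
        map_add' := fun x y => by simp [mul_add, Finset.sum_add_distrib]
        map_smul' := fun r x => by
          simp [MulOpposite.smul_eq_mul_unop, Finset.sum_mul, mul_assoc] }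
    exact ⟨K.liftQ g (fun x hx => hc x hx), hcb⟩
  tfae_have 1 → 4 := by
    intro h K hK
    ext b
    refine ⟨fun hb => ?_, fun hb c hc => hc b hb⟩
    have hs : IsSmallRightIdeal _ (colIdeal K) := by
      apply small_of_jac
      intro A hA
      rw [mem_jac_matrix]
      exact fun i j => hK _ (hA j) i
    have hI := h _ hs
    have hB : rep b ∈ (colIdeal K : Set (Matrix (Fin n) (Fin n) R)) := by
      rw [← hI]
      intro C hC
      ext i j
      rw [Matrix.mul_apply]
      refine hb (C i) fun x hx => ?_
      have h1 := hC (rep x) (fun _ => hx)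
      have h2 := congrFun (congrFun h1 i) j
      rwa [Matrix.mul_apply] at h2
    exact hB ⟨0, hn⟩
  tfae_have 4 → 1 := by
    intro h I hI
    have hJ := jac_of_small I hI
    have hK := h (colSub I) (fun b hb i => (mem_jac_matrix _).1 (hJ _ hb) i ⟨0, hn⟩)
    ext A
    refine ⟨fun hA => ?_, fun hA C hC => hC A hA⟩
    refine (mem_iff_cols I A).2 fun j => ?_
    have : (fun i => A i j) ∈ (colSub I : Set (Fin n → R)) := by
      rw [← hK]
      intro c hc
      have h1 := hA (Matrix.of fun _ k => c k) (fun B hB => by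
        ext i j
        rw [Matrix.mul_apply]
        exact hc _ ((mem_iff_cols I B).1 hB j))
      have h2 := congrFun (congrFun h1 ⟨0, hn⟩) j
      rwa [Matrix.mul_apply] at h2
    exact this
  tfae_finish
end

section
/- For a ring R the following are equivalent: (1) R is semilocal; (2) every right ideal of R has a weak supplement in R; (3) every left ideal of R has a weak supplement in R. -/
open Pointwise

theorem aux_small_iff {S M : Type*} [Ring S] [AddCommGroup M] [Module S M]
    [IsCoatomic (Submodule S M)] (N : Submodule S M) :
    (∀ K : Submodule S M, K ≠ ⊤ → N ⊔ K ≠ ⊤) ↔ N ≤ Module.jacobson S M := by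
  constructor
  · intro h
    refine le_sInf fun m hm => ?_
    by_contra hle
    refine h m hm.1 (hm.2 _ ?_)
    exact lt_of_le_of_ne le_sup_right fun e => hle (e ▸ le_sup_left)
  · intro h K hK e
    rcases eq_top_or_exists_le_coatom K with h1 | ⟨m, hm, hKm⟩
    · exact hK h1
    · exact hm.1 (top_le_iff.mp (e ▸ sup_le (h.trans (sInf_le hm)) hKm))

theorem aux_weak_iff {S M : Type*} [Ring S] [AddCommGroup M] [Module S M]
    [IsCoatomic (Submodule S M)] :
    (∀ N : Submodule S M, ∃ K : Submodule S M, N ⊔ K = ⊤ ∧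
      ∀ L : Submodule S M, L ≠ ⊤ → (N ⊓ K) ⊔ L ≠ ⊤) ↔
    IsSemisimpleModule S (M ⧸ Module.jacobson S M) := by
  simp_rw [aux_small_iff]
  rw [isSemisimpleModule_iff,
    (Submodule.comapMkQRelIso (Module.jacobson S M)).complementedLattice_iff]
  constructor
  · intro h
    refine ⟨fun ⟨N, hN⟩ => ?_⟩
    obtain ⟨K, h1, h2⟩ := h N
    have hN' : Module.jacobson S M ≤ N := hN
    refine ⟨⟨K ⊔ Module.jacobson S M, le_sup_right (a := K)⟩, IsCompl.of_le ?_ ?_⟩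
    · change N ⊓ (K ⊔ Module.jacobson S M) ≤ Module.jacobson S M
      rw [← inf_sup_assoc_of_le K hN']
      exact sup_le h2 le_rfl
    · change ⊤ ≤ N ⊔ (K ⊔ Module.jacobson S M)
      rw [← sup_assoc, h1, top_sup_eq]
  · intro h N
    obtain ⟨⟨K, hK⟩, hc⟩ := h.exists_isCompl ⟨N ⊔ Module.jacobson S M, le_sup_right (a := N)⟩
    have hK' : Module.jacobson S M ≤ K := hK
    have h1 : (N ⊔ Module.jacobson S M) ⊓ K ≤ Module.jacobson S M := hc.disjoint.le_bot
    have h2 : ⊤ ≤ (N ⊔ Module.jacobson S M) ⊔ K := hc.codisjoint.top_le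
    refine ⟨K, ?_, (inf_le_inf_right K le_sup_left).trans h1⟩
    rw [sup_assoc, sup_eq_right.mpr hK'] at h2
    exact top_le_iff.mp h2

theorem aux_unit_swap {R : Type*} [Ring R] (a b : R) (h : IsUnit (1 + a * b)) :
    IsUnit (1 + b * a) := by
  obtain ⟨u, hu⟩ := h
  have h1 : (1 + a * b) * ↑u⁻¹ = 1 := by rw [← hu]; simp
  have h2 : ↑u⁻¹ * (1 + a * b) = 1 := by rw [← hu]; simp
  refine ⟨⟨1 + b * a, 1 - b * ↑u⁻¹ * a, ?_, ?_⟩, rfl⟩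
  · have : (1 + b * a) * (1 - b * ↑u⁻¹ * a) = 1 + b * a - b * ((1 + a * b) * ↑u⁻¹) * a := by
      noncomm_ring
    rw [this, h1]; noncomm_ring
  · have : (1 - b * ↑u⁻¹ * a) * (1 + b * a) = 1 + b * a - b * (↑u⁻¹ * (1 + a * b)) * a := by
      noncomm_ring
    rw [this, h2]; noncomm_ring

theorem aux_mem_jac {R : Type*} [Ring R] (x : R) :
    x ∈ Ring.jacobson R ↔ ∀ y, IsUnit (1 + y * x) := by
  rw [← Ideal.jacobson_bot]
  constructor
  · intro hx
    have key : ∀ j ∈ Ideal.jacobson (⊥ : Ideal R), ∃ z, z * (1 + j) = 1 := by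
      intro j hj
      obtain ⟨z, hz⟩ := Ideal.mem_jacobson_iff.1 hj 1
      refine ⟨z, ?_⟩
      rw [Ideal.mem_bot, sub_eq_zero] at hz
      rw [mul_add, mul_one, add_comm]; simpa using hz
    intro y
    have hj := Ideal.mul_mem_left (Ideal.jacobson (⊥ : Ideal R)) y hx
    generalize y * x = j at hj
    obtain ⟨z, hz⟩ := key j hj
    obtain ⟨w, hw⟩ := key (-(z * j)) (neg_mem (Ideal.mul_mem_left _ _ hj))
    have hz' : 1 + -(z * j) = z := by rw [← hz]; noncomm_ring
    rw [hz'] at hw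
    have : w = 1 + j := left_inv_eq_right_inv hw hz
    exact ⟨⟨1 + j, z, this ▸ hw, hz⟩, rfl⟩
  · intro h
    refine Ideal.mem_jacobson_iff.2 fun y => ?_
    obtain ⟨u, hu⟩ := h y
    refine ⟨↑u⁻¹, ?_⟩
    have : (↑u⁻¹ : R) * y * x + ↑u⁻¹ = ↑u⁻¹ * (1 + y * x) := by noncomm_ring
    rw [Ideal.mem_bot, this, ← hu]; simp

theorem aux_op_mem_jac {R : Type*} [Ring R] (x : R) :
    MulOpposite.op x ∈ Ring.jacobson Rᵐᵒᵖ ↔ x ∈ Ring.jacobson R := by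
  rw [aux_mem_jac, aux_mem_jac, MulOpposite.op_surjective.forall]
  refine forall_congr' fun y => ?_
  rw [← MulOpposite.op_mul, ← MulOpposite.op_one, ← MulOpposite.op_add, isUnit_op]
  exact ⟨aux_unit_swap _ _, aux_unit_swap _ _⟩

/-- `op` as an isomorphism of right modules. -/
def auxOpEquiv (R : Type*) [Ring R] : R ≃ₗ[Rᵐᵒᵖ] Rᵐᵒᵖ where
  toFun := MulOpposite.op
  invFun := MulOpposite.unop
  map_add' _ _ := rfl
  map_smul' _ _ := rfl
  left_inv _ := rfl
  right_inv _ := rfl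

theorem aux_mem_right_jac {R : Type*} [Ring R] (x : R) :
    x ∈ Module.jacobson Rᵐᵒᵖ R ↔ x ∈ Ring.jacobson R := by
  rw [← aux_op_mem_jac, ← Module.comap_jacobson_of_bijective
    (f := (auxOpEquiv R).toLinearMap) (auxOpEquiv R).bijective]
  rfl

/-- The quotient map, as a map of right modules into the opposite quotient ring. -/
def auxRightMap (R : Type*) [Ring R] :
    R →ₛₗ[(Ideal.Quotient.mk (Ring.jacobson R)).op] (R ⧸ Ring.jacobson R)ᵐᵒᵖ where
  toFun x := MulOpposite.op (Ideal.Quotient.mk (Ring.jacobson R) x)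
  map_add' _ _ := rfl
  map_smul' _ _ := rfl

theorem aux_right {R : Type*} [Ring R] :
    IsSemisimpleModule Rᵐᵒᵖ (R ⧸ Module.jacobson Rᵐᵒᵖ R) ↔
      IsSemisimpleRing (R ⧸ Ring.jacobson R)ᵐᵒᵖ := by
  have hs : Function.Surjective (auxRightMap R) := fun y => by
    obtain ⟨x, hx⟩ := Ideal.Quotient.mk_surjective y.unop
    exact ⟨x, MulOpposite.unop_injective hx⟩
  have hk : LinearMap.ker (auxRightMap R) = Module.jacobson Rᵐᵒᵖ R := by
    ext x
    rw [aux_mem_right_jac, LinearMap.mem_ker, ← Ideal.Quotient.eq_zero_iff_mem]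
    exact MulOpposite.op_eq_zero_iff _
  have : RingHomSurjective (Ideal.Quotient.mk (Ring.jacobson R)).op := ⟨fun y => by
    obtain ⟨x, hx⟩ := Ideal.Quotient.mk_surjective y.unop
    exact ⟨MulOpposite.op x, MulOpposite.unop_injective hx⟩⟩
  refine LinearMap.isSemisimpleModule_iff_of_bijective
    (Submodule.liftQ _ (auxRightMap R) hk.ge) ⟨?_, ?_⟩
  · rw [← LinearMap.ker_eq_bot]
    exact Submodule.ker_liftQ_eq_bot _ _ _ hk.le
  · intro y
    obtain ⟨x, rfl⟩ := hs y
    exact ⟨Submodule.Quotient.mk x, rfl⟩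

theorem aux_left {R : Type*} [Ring R] :
    IsSemisimpleModule R (R ⧸ Ring.jacobson R) ↔ IsSemisimpleRing (R ⧸ Ring.jacobson R) := by
  let f : (R ⧸ Ring.jacobson R) →ₛₗ[Ideal.Quotient.mk (Ring.jacobson R)] (R ⧸ Ring.jacobson R) :=
    { toFun := fun x => x
      map_add' := fun _ _ => rfl
      map_smul' := fun r x => by
        obtain ⟨x, rfl⟩ := Ideal.Quotient.mk_surjective x
        rfl }
  have : RingHomSurjective (Ideal.Quotient.mk (Ring.jacobson R)) :=
    ⟨Ideal.Quotient.mk_surjective⟩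
  exact LinearMap.isSemisimpleModule_iff_of_bijective f Function.bijective_id

/-- `R` is semilocal iff every right ideal has a weak supplement iff
every left ideal has a weak supplement. -/
theorem semilocal_tfae_weakSupplements (R : Type*) [Ring R] :
    [ IsSemilocalRing R,
      ∀ I : Submodule Rᵐᵒᵖ R, HasWeakSupplementRight R I,
      ∀ I : Ideal R, HasWeakSupplementLeft R I ].TFAE := by
  have h0 : IsSemilocalRing R ↔ IsSemisimpleModule R (R ⧸ Ring.jacobson R) := by
    unfold IsSemilocalRing
    rw [Ideal.jacobson_bot]
  tfae_have 1 ↔ 3 := h0.trans (aux_weak_iff (S := R) (M := R)).symm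
  tfae_have 1 ↔ 2 := by
    have : IsCoatomic (Submodule Rᵐᵒᵖ R) :=
      (Submodule.orderIsoMapComap (auxOpEquiv R)).isCoatomic_iff.mpr
        (inferInstanceAs (IsCoatomic (Ideal Rᵐᵒᵖ)))
    rw [h0, aux_left, ← isSemisimpleRing_mulOpposite_iff, ← aux_right]
    exact (aux_weak_iff (S := Rᵐᵒᵖ) (M := R)).symm
  tfae_finish
end

section
/- If R is a semilocal ring, then R is right small dual if and only if R is right dual, i.e., if rl(I) = I for every small right ideal I of R then rl(T) = T for every right ideal T of R. -/
open Pointwise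

/-- If `1 - j` with `j ∈ J(R)`, then `1 - j` is right invertible. -/
theorem exists_right_inv_of_jacobson (R : Type*) [Ring R] (k : R)
    (hk : k - 1 ∈ Ideal.jacobson (⊥ : Ideal R)) : ∃ u : R, k * u = 1 := by
  obtain ⟨z, hz⟩ := Ideal.exists_mul_sub_mem_of_sub_one_mem_jacobson k hk
  have hz1 : z * k = 1 := by simpa [sub_eq_zero] using hz
  have hzJ : z - 1 ∈ Ideal.jacobson (⊥ : Ideal R) := by
    have h1 : z - 1 = -(z * (k - 1)) := by rw [mul_sub, hz1]; simp
    rw [h1]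
    exact neg_mem (Ideal.mul_mem_left _ _ hk)
  obtain ⟨w, hw⟩ := Ideal.exists_mul_sub_mem_of_sub_one_mem_jacobson z hzJ
  have hw1 : w * z = 1 := by simpa [sub_eq_zero] using hw
  have hwk : w = k := left_inv_eq_right_inv hw1 hz1
  exact ⟨z, hwk ▸ hw1⟩

/-- A right ideal inside the Jacobson radical is small. -/
theorem small_of_le_jacobson (R : Type*) [Ring R] (I : Submodule Rᵐᵒᵖ R)
    (hI : ∀ x ∈ I, x ∈ Ideal.jacobson (⊥ : Ideal R)) : IsSmallRightIdeal R I := by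
  intro K hK hIK
  apply hK
  have h1 : (1 : R) ∈ I ⊔ K := by rw [hIK]; trivial
  obtain ⟨j, hj, k, hk, hjk⟩ := Submodule.mem_sup.1 h1
  have hkJ : k - 1 ∈ Ideal.jacobson (⊥ : Ideal R) := by
    have : k - 1 = -j := by rw [← hjk]; abel
    rw [this]
    exact neg_mem (hI j hj)
  obtain ⟨u, hu⟩ := exists_right_inv_of_jacobson R k hkJ
  rw [eq_top_iff]
  intro x _
  have := K.smul_mem (MulOpposite.op (u * x)) hk
  rwa [op_smul_eq_mul, ← mul_assoc, hu, one_mul] at this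

/-- In a semilocal ring every right ideal has a weak supplement. -/
theorem hasWeakSupplementRight_of_semilocal (R : Type*) [Ring R]
    (h : IsSemilocalRing R) (T : Submodule Rᵐᵒᵖ R) : HasWeakSupplementRight R T := by
  let J : Ideal R := Ideal.jacobson (⊥ : Ideal R)
  have hJ2 : J.IsTwoSided := inferInstanceAs (Ideal.jacobson (⊥ : Ideal R)).IsTwoSided
  let q : R →+* R ⧸ J := Ideal.Quotient.mk J
  have hq : Function.Surjective q := Ideal.Quotient.mk_surjective
  have hS : IsSemisimpleRing (R ⧸ J) := by
    have : RingHomSurjective q := ⟨hq⟩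
    let e : (R ⧸ J) →ₛₗ[q] (R ⧸ J) :=
      { AddMonoidHom.id (R ⧸ J) with
        map_smul' := fun r x => by
          obtain ⟨y, rfl⟩ := Ideal.Quotient.mk_surjective x
          rfl }
    exact (e.isSemisimpleModule_iff_of_bijective Function.bijective_id).1 h
  let T' : Ideal (R ⧸ J)ᵐᵒᵖ :=
    { carrier := {x | ∃ t ∈ T, q t = x.unop}
      add_mem' := by
        rintro a b ⟨s, hs, hs'⟩ ⟨t, ht, ht'⟩
        exact ⟨s + t, T.add_mem hs ht, by simp [hs', ht']⟩
      zero_mem' := ⟨0, T.zero_mem, by simp⟩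
      smul_mem' := by
        rintro c a ⟨s, hs, hs'⟩
        obtain ⟨r, hr⟩ := hq c.unop
        refine ⟨s * r, T.smul_mem (MulOpposite.op r) hs, ?_⟩
        simp [hs', hr] }
  obtain ⟨K', hK'⟩ := exists_isCompl T'
  let K : Submodule Rᵐᵒᵖ R :=
    { carrier := {x | MulOpposite.op (q x) ∈ K'}
      add_mem' := by
        intro a b ha hb
        simpa using K'.add_mem ha hb
      zero_mem' := by simp
      smul_mem' := by
        intro c a ha
        have := K'.mul_mem_left (MulOpposite.op (q c.unop)) ha
        simpa [MulOpposite.smul_eq_mul_unop] using this }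
  refine ⟨K, ?_, small_of_le_jacobson R _ ?_⟩
  · rw [eq_top_iff]
    intro x _
    have hx : MulOpposite.op (q x) ∈ T' ⊔ K' := by rw [hK'.sup_eq_top]; trivial
    obtain ⟨a, ⟨t, ht, hta⟩, b, hb, hab⟩ := Submodule.mem_sup.1 hx
    refine Submodule.mem_sup.2 ⟨t, ht, x - t, ?_, by abel⟩
    change MulOpposite.op (q (x - t)) ∈ K'
    have : MulOpposite.op (q (x - t)) = b := by
      rw [map_sub, MulOpposite.op_sub, ← hab, hta]; simp
    rwa [this]
  · rintro x ⟨hxT, hxK⟩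
    have h1 : MulOpposite.op (q x) ∈ T' := ⟨x, hxT, rfl⟩
    have h2 : MulOpposite.op (q x) ∈ T' ⊓ K' := ⟨h1, hxK⟩
    rw [hK'.inf_eq_bot, Submodule.mem_bot, MulOpposite.op_eq_zero_iff] at h2
    exact Ideal.Quotient.eq_zero_iff_mem.1 h2

/-- A semilocal ring is right small dual iff it is right dual. -/
theorem semilocal_rightSmallDual_iff_rightDual (R : Type*) [Ring R]
    (h : IsSemilocalRing R) : IsRightSmallDual R ↔ IsRightDual R := by
  refine ⟨fun hd T => ?_, fun hd I _ => hd I⟩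
  obtain ⟨K, hTK, hsm⟩ := hasWeakSupplementRight_of_semilocal R h T
  have hI := hd _ hsm
  have h1 : (1 : R) ∈ T ⊔ K := by rw [hTK]; trivial
  obtain ⟨t, ht, k, hk, htk⟩ := Submodule.mem_sup.1 h1
  have hTm : ∀ y : R, t * y ∈ T := fun y => T.smul_mem (MulOpposite.op y) ht
  have hKm : ∀ y : R, k * y ∈ K := fun y => K.smul_mem (MulOpposite.op y) hk
  have hsplit : ∀ y : R, t * y + k * y = y := fun y => by rw [← add_mul, htk, one_mul]
  apply Set.Subset.antisymm
  · intro x hx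
    have hkx : k * x ∈ rAnn R (lAnn R ((T ⊓ K : Submodule Rᵐᵒᵖ R) : Set R)) := by
      intro a ha
      rw [← mul_assoc]
      apply hx
      intro s hs
      rw [mul_assoc]
      apply ha
      refine ⟨?_, hKm s⟩
      have : k * s = s - t * s := eq_sub_of_add_eq' (hsplit s)
      rw [this]
      exact T.sub_mem hs (hTm s)
    rw [hI] at hkx
    have := T.add_mem (hTm x) hkx.1
    rwa [hsplit] at this
  · intro x hx a ha
    exact ha x hx
end

section
/- Suppose R is a semiperfect ring such that rl(K) = K for every small right ideal K of R. Then rl(T) = T for every right ideal T of R. -/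
open Pointwise

theorem aux_isUnit_one_add {R : Type*} [Ring R] {x : R}
    (hx : x ∈ Ideal.jacobson (⊥ : Ideal R)) : IsUnit (1 + x) := by
  have key : ∀ y ∈ Ideal.jacobson (⊥ : Ideal R), ∃ z, z * (1 + y) = 1 := by
    intro y hy
    obtain ⟨z, hz⟩ := Ideal.mem_jacobson_iff.1 hy 1
    refine ⟨z, ?_⟩
    rw [Submodule.mem_bot] at hz
    rw [← sub_eq_zero, ← hz]
    noncomm_ring
  obtain ⟨z, hz⟩ := key x hx
  have hzx : -(z * x) ∈ Ideal.jacobson (⊥ : Ideal R) :=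
    neg_mem (Ideal.mul_mem_left _ z hx)
  obtain ⟨w, hw⟩ := key _ hzx
  have hz' : 1 + -(z * x) = z := by
    rw [← hz]; noncomm_ring
  rw [hz'] at hw
  have hwx : w = 1 + x := left_inv_eq_right_inv hw hz
  rw [hwx] at hw
  exact ⟨⟨1 + x, z, hw, hz⟩, rfl⟩

theorem aux_small {R : Type*} [Ring R] (K : Submodule Rᵐᵒᵖ R)
    (hK : ∀ k ∈ K, k ∈ Ideal.jacobson (⊥ : Ideal R)) : IsSmallRightIdeal R K := by
  intro L hL hKL
  apply hL
  have h1 : (1 : R) ∈ K ⊔ L := by rw [hKL]; trivial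
  obtain ⟨k, hk, l, hl, hkl⟩ := Submodule.mem_sup.1 h1
  have hu := aux_isUnit_one_add (neg_mem (hK k hk))
  have hl' : 1 + -k = l := by rw [← hkl]; abel
  rw [hl'] at hu
  obtain ⟨u, rfl⟩ := hu
  rw [eq_top_iff]
  intro x _
  have := L.smul_mem (MulOpposite.op ((↑u⁻¹ : R) * x)) hl
  simpa [MulOpposite.smul_eq_mul_unop] using this

theorem aux_exists_approx {R : Type*} [Ring R] (h : IsSemilocalRing R)
    (T : Submodule Rᵐᵒᵖ R) :
    ∃ a ∈ T, ∀ t ∈ T, a * t - t ∈ Ideal.jacobson (⊥ : Ideal R) := by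
  unfold IsSemilocalRing at h
  set J := Ideal.jacobson (⊥ : Ideal R) with hJ
  let π : R →+* R ⧸ J := Ideal.Quotient.mk J
  have hπ : Function.Surjective π := Ideal.Quotient.mk_surjective
  have hss : IsSemisimpleRing (R ⧸ J) := by
    have : RingHomSurjective π := ⟨hπ⟩
    let e : (R ⧸ J) →ₛₗ[π] (R ⧸ J) :=
      { AddMonoidHom.id (R ⧸ J) with
        map_smul' := fun r x => by
          obtain ⟨y, rfl⟩ := hπ x
          rfl }
    exact (e.isSemisimpleModule_iff_of_bijective Function.bijective_id).1 h
  let I : Ideal (R ⧸ J)ᵐᵒᵖ :=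
    { carrier := {q | ∃ t ∈ T, MulOpposite.op (π t) = q}
      add_mem' := by
        rintro _ _ ⟨s, hs, rfl⟩ ⟨t, ht, rfl⟩
        exact ⟨s + t, add_mem hs ht, by simp⟩
      zero_mem' := ⟨0, zero_mem _, by simp⟩
      smul_mem' := by
        rintro c _ ⟨t, ht, rfl⟩
        obtain ⟨r, hr⟩ := hπ c.unop
        refine ⟨t * r, T.smul_mem (MulOpposite.op r) ht, ?_⟩
        rw [map_mul, hr]; simp }
  obtain ⟨e, he, hI⟩ := IsSemisimpleRing.ideal_eq_span_idempotent I
  have heI : e ∈ I := by rw [hI]; exact Ideal.mem_span_singleton_self e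
  obtain ⟨a, ha, hae⟩ := heI
  refine ⟨a, ha, fun t ht => ?_⟩
  have htI : MulOpposite.op (π t) ∈ I := ⟨t, ht, rfl⟩
  rw [hI] at htI
  obtain ⟨c, hc⟩ := Submodule.mem_span_singleton.1 htI
  have h2 : MulOpposite.op (π t) * e = MulOpposite.op (π t) := by
    rw [← hc, smul_eq_mul, mul_assoc, he.eq]
  rw [← hae, ← MulOpposite.op_mul, ← map_mul] at h2
  exact Ideal.Quotient.eq.1 (MulOpposite.op_injective h2)

theorem aux_exists_idem {R : Type*} [Ring R] (h : IsSemiperfectRing R)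
    (T : Submodule Rᵐᵒᵖ R) :
    ∃ e ∈ T, e * e = e ∧ ∀ t ∈ T, e * t = 0 → t ∈ Ideal.jacobson (⊥ : Ideal R) := by
  obtain ⟨a, haT, ha⟩ := aux_exists_approx h.1 T
  obtain ⟨f, hf, hfa⟩ := h.2 a (ha a haT)
  have hu := aux_isUnit_one_add (neg_mem hfa)
  obtain ⟨u, hu⟩ := hu
  have huf : (u : R) * f = a * f := by
    rw [hu]
    have : (1 + -(f - a)) * f = f - f * f + a * f := by noncomm_ring
    rw [this, hf]; simp
  refine ⟨u * f * (↑u⁻¹ : R), ?_, ?_, ?_⟩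
  · rw [huf, mul_assoc]
    exact T.smul_mem (MulOpposite.op (f * (↑u⁻¹ : R))) haT
  · calc (u : R) * f * ↑u⁻¹ * (u * f * ↑u⁻¹) = u * f * (↑u⁻¹ * u) * f * ↑u⁻¹ := by
          simp only [mul_assoc]
      _ = u * (f * f) * ↑u⁻¹ := by simp [mul_assoc]
      _ = _ := by rw [hf]
  · intro t ht het
    have h0 : f * (↑u⁻¹ * t) = 0 := by
      have : (↑u⁻¹ : R) * (u * f * ↑u⁻¹ * t) = 0 := by rw [het, mul_zero]
      simpa [mul_assoc] using this
    -- `t = u * s` with `f * s = 0`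
    set s := (↑u⁻¹ : R) * t with hs
    have hts : t = s + -(f - a) * s := by
      have : t = u * s := by simp [hs]
      rw [this, hu]; noncomm_ring
    have h1 : a * t - t ∈ Ideal.jacobson (⊥ : Ideal R) := ha t ht
    have h2 : f * t = f * (-(f - a) * s) := by
      conv_lhs => rw [hts]
      rw [mul_add, h0, zero_add]
    have h3 : f * t ∈ Ideal.jacobson (⊥ : Ideal R) := by
      rw [h2]
      exact Ideal.mul_mem_left _ _ (Ideal.mul_mem_right _ _ (neg_mem hfa))
    have h4 : (f - a) * t ∈ Ideal.jacobson (⊥ : Ideal R) := Ideal.mul_mem_right _ _ hfa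
    have h5 : t = f * t - (f - a) * t - (a * t - t) := by noncomm_ring
    rw [h5]
    exact sub_mem (sub_mem h3 h4) h1

/-- If `R` is semiperfect and `rl(K) = K` for every small right ideal
`K`, then `rl(T) = T` for every right ideal `T`. -/
theorem semiperfect_small_dual_implies_dual (R : Type*) [Ring R]
    (h : IsSemiperfectRing R)
    (hsd : ∀ K : Submodule Rᵐᵒᵖ R, IsSmallRightIdeal R K →
      rAnn R (lAnn R (K : Set R)) = (K : Set R)) :
    ∀ T : Submodule Rᵐᵒᵖ R, rAnn R (lAnn R (T : Set R)) = (T : Set R) := by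
  intro T
  obtain ⟨e, heT, hee, he⟩ := aux_exists_idem h T
  have hmulT : ∀ t ∈ T, ∀ r : R, t * r ∈ T := fun t ht r =>
    T.smul_mem (MulOpposite.op r) ht
  apply Set.Subset.antisymm
  · intro x hx
    let K : Submodule Rᵐᵒᵖ R :=
      { carrier := {t | t ∈ T ∧ e * t = 0}
        add_mem' := by
          rintro a b ⟨ha, ha'⟩ ⟨hb, hb'⟩
          exact ⟨add_mem ha hb, by rw [mul_add, ha', hb', add_zero]⟩
        zero_mem' := ⟨zero_mem _, mul_zero _⟩
        smul_mem' := by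
          rintro c a ⟨ha, ha'⟩
          refine ⟨T.smul_mem c ha, ?_⟩
          rw [MulOpposite.smul_eq_mul_unop, ← mul_assoc, ha', zero_mul] }
    have hK := hsd K (aux_small K fun k hk => he k hk.1 hk.2)
    have hxK : x - e * x ∈ rAnn R (lAnn R (K : Set R)) := by
      intro r hr
      have hrT : r * (1 - e) ∈ lAnn R (T : Set R) := by
        intro t ht
        have : t - e * t ∈ K := by
          refine ⟨sub_mem ht (hmulT e heT t), ?_⟩
          rw [mul_sub, ← mul_assoc, hee, sub_self]
        have h' := hr _ this
        rw [← h']; noncomm_ring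
      have h' := hx _ hrT
      rw [← h']; noncomm_ring
    rw [hK] at hxK
    have := add_mem hxK.1 (hmulT e heT x)
    simpa using this
  · intro t ht r hr
    exact hr t ht
end

section
/- If R is a left perfect ring, then R is small dual if and only if R is dual. -/
open Pointwise

theorem aux_gen {B : Type*} [Ring B] [IsSemisimpleRing B] (I : Ideal B) :
    ∃ e ∈ I, ∀ t ∈ I, t * e = t := by
  obtain ⟨C, hC⟩ := exists_isCompl I
  have h1 : (1 : B) ∈ I ⊔ C := by rw [hC.sup_eq_top]; trivial
  obtain ⟨e, he, f, hf, hef⟩ := Submodule.mem_sup.1 h1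
  refine ⟨e, he, fun t ht => ?_⟩
  have h2 : t * f = t - t * e := by
    rw [eq_sub_iff_add_eq, ← mul_add, add_comm, hef, mul_one]
  have h3 : t * f ∈ I ⊓ C :=
    ⟨by rw [h2]; exact I.sub_mem ht (I.mul_mem_left t he), C.mul_mem_left t hf⟩
  rw [hC.inf_eq_bot, Submodule.mem_bot, h2, sub_eq_zero] at h3
  exact h3.symm

theorem aux_nil {R : Type*} [Ring R] (h : IsLeftPerfect R) (x : R)
    (hx : x ∈ Ideal.jacobson (⊥ : Ideal R)) : IsNilpotent x := by
  obtain ⟨n, hn⟩ := h.2 (fun _ => x) (fun _ => hx)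
  exact ⟨n + 1, by rw [pow_succ']; simpa [List.ofFn_const] using hn⟩

theorem aux_ss {R : Type*} [Ring R] (h : IsSemilocalRing R) :
    IsSemisimpleRing (R ⧸ Ideal.jacobson (⊥ : Ideal R)) := by
  have : RingHomSurjective (Ideal.Quotient.mk (Ideal.jacobson (⊥ : Ideal R))) :=
    ⟨Ideal.Quotient.mk_surjective⟩
  let e : (R ⧸ Ideal.jacobson (⊥ : Ideal R)) →ₛₗ[Ideal.Quotient.mk (Ideal.jacobson (⊥ : Ideal R))]
      (R ⧸ Ideal.jacobson (⊥ : Ideal R)) :=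
    { AddMonoidHom.id _ with
      map_smul' := fun r x => by
        obtain ⟨x, rfl⟩ := Ideal.Quotient.mk_surjective x
        rfl }
  exact (e.isSemisimpleModule_iff_of_bijective Function.bijective_id).1 h

/-- lift an idempotent modulo the radical, up to conjugation on either side -/
theorem aux_lift {R : Type*} [Ring R] (h : IsLeftPerfect R) (a : R)
    (ha : a * a - a ∈ Ideal.jacobson (⊥ : Ideal R)) :
    (∃ e c : R, e * e = e ∧ e = a * c ∧ e - a ∈ Ideal.jacobson (⊥ : Ideal R)) ∧
    (∃ e c : R, e * e = e ∧ e = c * a ∧ e - a ∈ Ideal.jacobson (⊥ : Ideal R)) := by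
  let q := Ideal.Quotient.mk (Ideal.jacobson (⊥ : Ideal R))
  have hq : ∀ x y : R, q x = q y ↔ x - y ∈ Ideal.jacobson (⊥ : Ideal R) :=
    fun x y => Ideal.Quotient.eq
  have haq : q a * q a = q a := by rw [← map_mul]; exact (hq _ _).2 ha
  obtain ⟨f, hf, hfa⟩ := exists_isIdempotentElem_eq_of_ker_isNilpotent q
    (fun x hx => aux_nil h x (by rwa [Ideal.mk_ker] at hx)) (q a) ⟨a, rfl⟩ haq
  have hf : f * f = f := hf
  have key : ∀ y : R, q y = 1 → ∃ v, y * v = 1 ∧ v * y = 1 ∧ q v = 1 := by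
    intro y hy
    have hn := aux_nil h (y - 1) ((hq _ _).1 (by rw [hy, map_one]))
    have hu := hn.isUnit_one_add
    rw [add_sub_cancel] at hu
    obtain ⟨u, rfl⟩ := hu
    refine ⟨(u⁻¹ : Rˣ), by simp, by simp, ?_⟩
    have : q ((u : R) * (u⁻¹ : Rˣ)) = 1 := by simp
    rwa [map_mul, hy, one_mul] at this
  constructor
  · obtain ⟨v, h1, h2, h3⟩ := key (1 - f + a * f) (by simp [hfa, haq])
    have huf : (1 - f + a * f) * f = a * f := by
      rw [add_mul, sub_mul, one_mul, hf, sub_self, zero_add, mul_assoc, hf]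
    refine ⟨a * f * v, f * v, ?_, by rw [mul_assoc], ?_⟩
    · rw [← huf]
      calc _ = (1 - f + a * f) * f * (v * (1 - f + a * f)) * f * v := by noncomm_ring
        _ = (1 - f + a * f) * (f * f) * v := by rw [h2]; noncomm_ring
        _ = _ := by rw [hf]
    · rw [← hq]; simp [h3, hfa, haq]
  · obtain ⟨v, h1, h2, h3⟩ := key (1 - f + f * a) (by simp [hfa, haq])
    have huf : f * (1 - f + f * a) = f * a := by
      rw [mul_add, mul_sub, mul_one, hf, sub_self, zero_add, ← mul_assoc, hf]
    refine ⟨v * (f * a), v * f, ?_, by rw [mul_assoc], ?_⟩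
    · rw [← huf]
      calc _ = v * f * ((1 - f + f * a) * v) * f * (1 - f + f * a) := by noncomm_ring
        _ = v * ((f * f) * (1 - f + f * a)) := by rw [h1]; noncomm_ring
        _ = _ := by rw [hf]
    · rw [← hq]; simp [h3, hfa, haq]

theorem aux_left_s13 {R : Type*} [Ring R] (h : IsLeftPerfect R) (T : Ideal R) :
    ∃ e ∈ T, e * e = e ∧ ∀ t ∈ T, t * e = 0 → t ∈ Ideal.jacobson (⊥ : Ideal R) := by
  have := aux_ss h.1
  let q := Ideal.Quotient.mk (Ideal.jacobson (⊥ : Ideal R))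
  have hq : ∀ x y : R, q x = q y ↔ x - y ∈ Ideal.jacobson (⊥ : Ideal R) :=
    fun x y => Ideal.Quotient.eq
  let I : Ideal (R ⧸ Ideal.jacobson (⊥ : Ideal R)) :=
    { carrier := {x | ∃ t ∈ T, q t = x}
      add_mem' := by
        rintro _ _ ⟨s, hs, rfl⟩ ⟨t, ht, rfl⟩
        exact ⟨s + t, T.add_mem hs ht, map_add _ _ _⟩
      zero_mem' := ⟨0, T.zero_mem, map_zero _⟩
      smul_mem' := by
        rintro c _ ⟨t, ht, rfl⟩
        obtain ⟨c, rfl⟩ := Ideal.Quotient.mk_surjective c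
        exact ⟨c * t, T.mul_mem_left c ht, map_mul _ _ _⟩ }
  obtain ⟨_, ⟨a, haT, rfl⟩, ha⟩ := aux_gen I
  have ha' : ∀ t ∈ T, q t * q a = q t := fun t ht => ha _ ⟨t, ht, rfl⟩
  obtain ⟨e, c, he, hc, hea⟩ := (aux_lift h a (by rw [← hq, map_mul]; exact ha' a haT)).2
  refine ⟨e, hc ▸ T.mul_mem_left c haT, he, fun t ht hte => ?_⟩
  have h1 := ha' t ht
  rw [← (hq _ _).2 hea, ← map_mul, hte] at h1
  exact Ideal.Quotient.eq_zero_iff_mem.1 (h1.symm.trans (map_zero q))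

theorem aux_mul {R : Type*} [Ring R] (T : Submodule Rᵐᵒᵖ R) {t : R} (ht : t ∈ T) (c : R) :
    t * c ∈ T := T.smul_mem (MulOpposite.op c) ht

theorem aux_right_s13 {R : Type*} [Ring R] (h : IsLeftPerfect R) (T : Submodule Rᵐᵒᵖ R) :
    ∃ e ∈ T, e * e = e ∧ ∀ t ∈ T, e * t = 0 → t ∈ Ideal.jacobson (⊥ : Ideal R) := by
  have := aux_ss h.1
  let q := Ideal.Quotient.mk (Ideal.jacobson (⊥ : Ideal R))
  have hq : ∀ x y : R, q x = q y ↔ x - y ∈ Ideal.jacobson (⊥ : Ideal R) :=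
    fun x y => Ideal.Quotient.eq
  let I : Ideal (R ⧸ Ideal.jacobson (⊥ : Ideal R))ᵐᵒᵖ :=
    { carrier := {x | ∃ t ∈ T, MulOpposite.op (q t) = x}
      add_mem' := by
        rintro _ _ ⟨s, hs, rfl⟩ ⟨t, ht, rfl⟩
        exact ⟨s + t, T.add_mem hs ht, by rw [map_add, MulOpposite.op_add]⟩
      zero_mem' := ⟨0, T.zero_mem, by rw [map_zero, MulOpposite.op_zero]⟩
      smul_mem' := by
        rintro c _ ⟨t, ht, rfl⟩
        obtain ⟨c', hc'⟩ := Ideal.Quotient.mk_surjective c.unop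
        refine ⟨t * c', aux_mul T ht c', ?_⟩
        rw [map_mul, MulOpposite.op_mul, smul_eq_mul]
        congr 1
        exact MulOpposite.unop_injective hc' }
  obtain ⟨_, ⟨a, haT, rfl⟩, ha⟩ := aux_gen I
  have ha' : ∀ t ∈ T, q a * q t = q t := fun t ht =>
    MulOpposite.op_injective (ha _ ⟨t, ht, rfl⟩)
  obtain ⟨e, c, he, hc, hea⟩ := (aux_lift h a (by rw [← hq, map_mul]; exact ha' a haT)).1
  refine ⟨e, hc ▸ aux_mul T haT c, he, fun t ht hte => ?_⟩
  have h1 := ha' t ht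
  rw [← (hq _ _).2 hea, ← map_mul, hte] at h1
  exact Ideal.Quotient.eq_zero_iff_mem.1 (h1.symm.trans (map_zero q))

theorem aux_unit {R : Type*} [Ring R] (h : IsLeftPerfect R) {i k : R}
    (hi : i ∈ Ideal.jacobson (⊥ : Ideal R)) (hk : i + k = 1) : IsUnit k := by
  have := (aux_nil h i hi).isUnit_one_sub
  rwa [← hk, add_sub_cancel_left] at this

theorem aux_smallL {R : Type*} [Ring R] (h : IsLeftPerfect R) (I : Ideal R)
    (hI : ∀ x ∈ I, x ∈ Ideal.jacobson (⊥ : Ideal R)) : IsSmallLeftIdeal R I := by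
  intro K hK hs
  have h1 : (1 : R) ∈ I ⊔ K := by rw [hs]; trivial
  obtain ⟨i, hi, k, hk, hik⟩ := Submodule.mem_sup.1 h1
  exact hK (Ideal.eq_top_of_isUnit_mem K hk (aux_unit h (hI i hi) hik))

theorem aux_smallR {R : Type*} [Ring R] (h : IsLeftPerfect R) (I : Submodule Rᵐᵒᵖ R)
    (hI : ∀ x ∈ I, x ∈ Ideal.jacobson (⊥ : Ideal R)) : IsSmallRightIdeal R I := by
  intro K hK hs
  have h1 : (1 : R) ∈ I ⊔ K := by rw [hs]; trivial
  obtain ⟨i, hi, k, hk, hik⟩ := Submodule.mem_sup.1 h1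
  obtain ⟨u, rfl⟩ := aux_unit h (hI i hi) hik
  refine hK (eq_top_iff.2 fun x _ => ?_)
  have := aux_mul K hk ((u⁻¹ : Rˣ) * x)
  rwa [Units.mul_inv_cancel_left] at this

theorem aux_dualL {R : Type*} [Ring R] (h : IsLeftPerfect R) (hs : IsLeftSmallDual R) :
    IsLeftDual R := by
  intro T
  obtain ⟨e, heT, he, hJ⟩ := aux_left_s13 h T
  let T' : Ideal R := T ⊓ lAnnIdeal R {e}
  have hT' := hs T' (aux_smallL h T' fun t ht => hJ t ht.1 (ht.2 e rfl))
  apply Set.Subset.antisymm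
  · intro x hx
    have hx : ∀ y, (∀ t ∈ T, t * y = 0) → x * y = 0 := fun y hy => hx y hy
    have hmem : x - x * e ∈ lAnn R (rAnn R (T' : Set R)) := by
      intro y hy
      have hy : ∀ t ∈ T', t * y = 0 := fun t ht => hy t ht
      have := hx (y - e * y) (fun t ht => by
        have h1 := hy (t - t * e) ⟨T.sub_mem ht (T.mul_mem_left t heT), by
          intro z hz
          rw [Set.mem_singleton_iff.1 hz, sub_mul, mul_assoc, he, sub_self]⟩
        rw [mul_sub, ← mul_assoc, ← sub_mul, h1])
      rwa [mul_sub, ← mul_assoc, ← sub_mul] at this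
    rw [hT'] at hmem
    have := T.add_mem hmem.1 (T.mul_mem_left x heT)
    rwa [sub_add_cancel] at this
  · intro x hx y hy
    exact hy x hx

theorem aux_dualR {R : Type*} [Ring R] (h : IsLeftPerfect R) (hs : IsRightSmallDual R) :
    IsRightDual R := by
  intro T
  obtain ⟨e, heT, he, hJ⟩ := aux_right_s13 h T
  let E : Submodule Rᵐᵒᵖ R :=
    { carrier := {x | e * x = 0}
      add_mem' := by
        intro a b ha hb
        have ha : e * a = 0 := ha
        have hb : e * b = 0 := hb
        change e * (a + b) = 0
        rw [mul_add, ha, hb, add_zero]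
      zero_mem' := mul_zero e
      smul_mem' := by
        intro c a ha
        have ha : e * a = 0 := ha
        change e * (a * c.unop) = 0
        rw [← mul_assoc, ha, zero_mul] }
  let T' : Submodule Rᵐᵒᵖ R := T ⊓ E
  have hT' := hs T' (aux_smallR h T' fun t ht => hJ t ht.1 ht.2)
  apply Set.Subset.antisymm
  · intro x hx
    have hx : ∀ y, (∀ t ∈ T, y * t = 0) → y * x = 0 := fun y hy => hx y hy
    have hmem : x - e * x ∈ rAnn R (lAnn R (T' : Set R)) := by
      intro y hy
      have hy : ∀ t ∈ T', y * t = 0 := fun t ht => hy t ht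
      have := hx (y - y * e) (fun t ht => by
        have h1 := hy (t - e * t) ⟨T.sub_mem ht (aux_mul T heT t), by
          change e * (t - e * t) = 0
          rw [mul_sub, ← mul_assoc, he, sub_self]⟩
        rw [sub_mul, mul_assoc, ← mul_sub, h1])
      rwa [sub_mul, mul_assoc, ← mul_sub] at this
    rw [hT'] at hmem
    have := T.add_mem hmem.1 (aux_mul T heT x)
    rwa [sub_add_cancel] at this
  · intro x hx y hy
    exact hy x hx

/-- A left perfect ring is small dual iff it is dual. -/
theorem leftPerfect_smallDual_iff_dual (R : Type*) [Ring R] (h : IsLeftPerfect R) :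
    (IsLeftSmallDual R ∧ IsRightSmallDual R) ↔ (IsLeftDual R ∧ IsRightDual R) :=
  ⟨fun hs => ⟨aux_dualL h hs.1, aux_dualR h hs.2⟩,
    fun hd => ⟨fun I _ => hd.1 I, fun I _ => hd.2 I⟩⟩
end

section
/- Let R be a ring and b, r_1, …, r_n, a_1, …, a_n ∈ R such that b + a_1·r_1 + ⋯ + a_n·r_n = 1. Then bR ∩ (a_1R + ⋯ + a_nR) = b·a_1R + ⋯ + b·a_nR. -/
open Pointwise

/-- If `b + a₁r₁ + ⋯ + aₙrₙ = 1`, then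
`bR ∩ (a₁R + ⋯ + aₙR) = ba₁R + ⋯ + baₙR`. -/
theorem span_inf_eq_iSup_span (R : Type*) [Ring R] (n : ℕ) (b : R) (a r : Fin n → R)
    (h : b + ∑ i, a i * r i = 1) :
    Submodule.span Rᵐᵒᵖ {b} ⊓ (⨆ i, Submodule.span Rᵐᵒᵖ {a i}) =
      ⨆ i, Submodule.span Rᵐᵒᵖ ({b * a i} : Set R) := by
  let L : R →ₗ[Rᵐᵒᵖ] R :=
    { toFun := fun x => b * x
      map_add' := fun x y => mul_add b x y
      map_smul' := fun c x => by simp [mul_assoc] }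
  have hL : ∀ x, L x = b * x := fun _ => rfl
  have hmul : ∀ (P : Submodule Rᵐᵒᵖ R) (x y : R), x ∈ P → x * y ∈ P := fun P x y hx => by
    have := P.smul_mem (MulOpposite.op y) hx
    simpa using this
  have ha : ∀ i, a i ∈ ⨆ i, Submodule.span Rᵐᵒᵖ {a i} := fun i =>
    Submodule.mem_iSup_of_mem i (Submodule.mem_span_singleton_self _)
  have hs : ∀ c, (∑ i, a i * r i) * c ∈ ⨆ i, Submodule.span Rᵐᵒᵖ {a i} := fun c =>
    hmul _ _ _ (Submodule.sum_mem _ fun i _ => hmul _ _ _ (ha i))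
  have hc : ∀ c, c = b * c + (∑ i, a i * r i) * c := fun c => by
    rw [← add_mul, h, one_mul]
  apply le_antisymm
  · rintro x ⟨hx1, hx2⟩
    obtain ⟨c, rfl⟩ := Submodule.mem_span_singleton.1 hx1
    have hx3 : b * c.unop ∈ ⨆ i, Submodule.span Rᵐᵒᵖ {a i} := hx2
    have hcA : c.unop ∈ ⨆ i, Submodule.span Rᵐᵒᵖ {a i} := by
      rw [hc c.unop]
      exact Submodule.add_mem _ hx3 (hs _)
    have key := Submodule.mem_map_of_mem (f := L) hcA
    rw [Submodule.map_iSup] at key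
    simp only [Submodule.map_span, Set.image_singleton, hL] at key
    exact key
  · refine iSup_le fun i => ?_
    rw [Submodule.span_singleton_le_iff_mem]
    refine ⟨hmul _ _ _ (Submodule.mem_span_singleton_self _), ?_⟩
    have : b * a i = a i - (∑ j, a j * r j) * a i := eq_sub_of_add_eq (hc (a i)).symm
    rw [this]
    exact Submodule.sub_mem _ (ha i) (hs _)
end

section
/- Suppose R is a semiregular right small dual ring. Then (1) R is a left C2 ring, and (2) J(R) equals the left singular ideal Z_l of R. -/
open Pointwise

theorem sd_J_right {R : Type*} [Ring R] {a : R} (ha : a ∈ Ideal.jacobson (⊥ : Ideal R)) (r : R) :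
    a * r ∈ Ideal.jacobson (⊥ : Ideal R) :=
  Ideal.mul_mem_right r _ ha

theorem sd_left_inv {R : Type*} [Ring R] {a : R} (ha : a ∈ Ideal.jacobson (⊥ : Ideal R)) :
    ∃ z : R, z * (1 - a) = 1 := by
  obtain ⟨z, hz⟩ := Ideal.mem_jacobson_iff.1 ha (-1)
  refine ⟨z, ?_⟩
  rw [Submodule.mem_bot] at hz
  have : z * (1 - a) - 1 = 0 := by rw [← hz]; noncomm_ring
  exact sub_eq_zero.1 this

theorem sd_unit {R : Type*} [Ring R] {a : R} (ha : a ∈ Ideal.jacobson (⊥ : Ideal R)) :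
    ∃ z : R, z * (1 - a) = 1 ∧ (1 - a) * z = 1 := by
  obtain ⟨z, hz⟩ := sd_left_inv ha
  have hz' : z = 1 - (-(z * a)) := by
    rw [← hz]; noncomm_ring
  obtain ⟨w, hw⟩ := sd_left_inv (a := -(z * a)) (neg_mem (Ideal.mul_mem_left _ z ha))
  rw [← hz'] at hw
  have : w = 1 - a := by
    calc w = w * (z * (1 - a)) := by rw [hz, mul_one]
      _ = 1 - a := by rw [← mul_assoc, hw, one_mul]
  exact ⟨z, hz, this ▸ hw⟩

/-- The principal right ideal `aR`. -/
def sdPR (R : Type*) [Ring R] (a : R) : Submodule Rᵐᵒᵖ R where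
  carrier := {x | ∃ r, x = a * r}
  add_mem' := by
    rintro _ _ ⟨r, rfl⟩ ⟨s, rfl⟩
    exact ⟨r + s, (mul_add _ _ _).symm⟩
  zero_mem' := ⟨0, (mul_zero _).symm⟩
  smul_mem' := by
    rintro c _ ⟨r, rfl⟩
    exact ⟨r * c.unop, by rw [← mul_assoc]; rfl⟩

theorem sd_small {R : Type*} [Ring R] {a : R} (ha : a ∈ Ideal.jacobson (⊥ : Ideal R)) :
    IsSmallRightIdeal R (sdPR R a) := by
  intro K hK hsup
  apply hK
  have h1 : (1 : R) ∈ sdPR R a ⊔ K := by rw [hsup]; trivial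
  obtain ⟨y, ⟨r, rfl⟩, k, hk, hyk⟩ := Submodule.mem_sup.1 h1
  obtain ⟨z, -, hz⟩ := sd_unit (sd_J_right ha r)
  have hk' : k = 1 - a * r := by rw [← hyk]; noncomm_ring
  rw [eq_top_iff]
  intro x _
  have := K.smul_mem (MulOpposite.op (z * x)) hk
  rw [MulOpposite.smul_eq_mul_unop, MulOpposite.unop_op, ← mul_assoc, hk', hz, one_mul] at this
  exact this

theorem sd_J_dual {R : Type*} [Ring R] (h : IsRightSmallDual R) {a : R}
    (ha : a ∈ Ideal.jacobson (⊥ : Ideal R)) (x : R) (hx : ∀ y, y * a = 0 → y * x = 0) :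
    ∃ r, x = a * r := by
  have h1 : x ∈ rAnn R (lAnn R (sdPR R a : Set R)) := by
    intro y hy
    exact hx y (hy a ⟨1, (mul_one a).symm⟩)
  rw [h _ (sd_small ha)] at h1
  exact h1

theorem sd_idem {R : Type*} [Ring R]
    (hreg : IsJRegular R)
    (hlift : ∀ a : R, a * a - a ∈ Ideal.jacobson (⊥ : Ideal R) →
      ∃ e : R, e * e = e ∧ e - a ∈ Ideal.jacobson (⊥ : Ideal R)) (a : R) :
    ∃ e c : R, e * e = e ∧ e = a * c ∧ a - e * a ∈ Ideal.jacobson (⊥ : Ideal R) := by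
  obtain ⟨b, hb⟩ := hreg a
  have hff : (a * b) * (a * b) - a * b ∈ Ideal.jacobson (⊥ : Ideal R) := by
    have := sd_J_right hb b
    convert this using 1
    noncomm_ring
  obtain ⟨f, hf, hfa⟩ := hlift _ hff
  obtain ⟨v, hv1, hv2⟩ := sd_unit hfa
  have key : f = f * (a * b) * v := by
    calc f = f * ((1 - (f - a * b)) * v) := by rw [hv2, mul_one]
      _ = (f - f * f + f * (a * b)) * v := by noncomm_ring
      _ = _ := by rw [hf, sub_self, zero_add]
  refine ⟨a * b * v * f, b * v * f, ?_, by noncomm_ring, ?_⟩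
  · calc a * b * v * f * (a * b * v * f) = a * b * v * (f * (a * b) * v) * f := by noncomm_ring
      _ = a * b * v * f := by rw [← key, mul_assoc (a * b * v), hf]
  · have hv : v - 1 ∈ Ideal.jacobson (⊥ : Ideal R) := by
      have : v - 1 = v * (f - a * b) := by
        rw [← hv1]; noncomm_ring
      rw [this]
      exact Ideal.mul_mem_left _ _ hfa
    have e1 := sd_J_right (Ideal.mul_mem_left _ (a * b) hv) (f * a)
    have e2 := sd_J_right (Ideal.mul_mem_left _ (a * b) hfa) a
    have e3 := sd_J_right hff a
    have := neg_mem (add_mem (add_mem (add_mem e1 e2) e3) hb)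
    convert this using 1
    noncomm_ring

/-- `R` is left P-injective: `rl(a) = aR`. -/
theorem sd_pinj {R : Type*} [Ring R]
    (hreg : IsJRegular R)
    (hlift : ∀ a : R, a * a - a ∈ Ideal.jacobson (⊥ : Ideal R) →
      ∃ e : R, e * e = e ∧ e - a ∈ Ideal.jacobson (⊥ : Ideal R))
    (h : IsRightSmallDual R) (a x : R) (hx : ∀ y, y * a = 0 → y * x = 0) :
    ∃ r, x = a * r := by
  obtain ⟨e, c, he, hec, hJ⟩ := sd_idem hreg hlift a
  obtain ⟨r, hr⟩ := sd_J_dual h hJ (x - e * x) (by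
    intro y hy
    have := hx (y - y * e) (by rw [← hy]; noncomm_ring)
    rw [← this]; noncomm_ring)
  refine ⟨c * x + r - c * a * r, ?_⟩
  calc x = e * x + (x - e * x) := by noncomm_ring
    _ = (a * c) * x + (a - (a * c) * a) * r := by rw [hr, ← hec]
    _ = _ := by noncomm_ring

/-- If `R` is semiregular (`R/J` von Neumann regular and idempotents
lift modulo `J`) and right small dual, then `R` is a left C2 ring and `J = Z_l`. -/
theorem semiregular_rightSmallDual_C2_and_J_eq_Zl (R : Type*) [Ring R]
    (hreg : IsJRegular R)
    (hlift : ∀ a : R, a * a - a ∈ Ideal.jacobson (⊥ : Ideal R) →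
      ∃ e : R, e * e = e ∧ e - a ∈ Ideal.jacobson (⊥ : Ideal R))
    (h : IsRightSmallDual R) :
    (∀ I : Ideal R,
      (∃ J : Ideal R, (∃ J' : Ideal R, IsCompl J J') ∧ Nonempty (I ≃ₗ[R] J)) →
        ∃ I' : Ideal R, IsCompl I I') ∧
    (Ideal.jacobson (⊥ : Ideal R) : Set R) =
      {x : R | ∀ L : Ideal R, L ≠ ⊥ → lAnnIdeal R {x} ⊓ L ≠ ⊥} := by
  have hP := sd_pinj hreg hlift h
  refine ⟨?_, ?_⟩
  · rintro I ⟨J, ⟨J', hJ⟩, ⟨φ⟩⟩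
    have h1 : (1 : R) ∈ J ⊔ J' := by rw [hJ.sup_eq_top]; trivial
    obtain ⟨e, he, f, hf, hef⟩ := Submodule.mem_sup.1 h1
    have hxe : ∀ x ∈ J, x * e = x := by
      intro x hx
      have h2 : x - x * e = x * f := by
        calc x - x * e = x * (e + f) - x * e := by rw [hef, mul_one]
          _ = _ := by noncomm_ring
      have h3 : x - x * e ∈ J ⊓ J' :=
        ⟨sub_mem hx (J.mul_mem_left x he), h2 ▸ J'.mul_mem_left x hf⟩
      rw [hJ.inf_eq_bot, Submodule.mem_bot] at h3
      exact (sub_eq_zero.1 h3).symm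
    set a : I := φ.symm ⟨e, he⟩ with ha
    have hφa : φ a = ⟨e, he⟩ := by simp [ha]
    clear_value a
    have hiff : ∀ y : R, y * (a : R) = 0 ↔ y * e = 0 := by
      intro y
      have t1 : y * (a : R) = 0 ↔ y • a = 0 := by
        rw [← Subtype.coe_inj]; simp
      have t2 : y * e = 0 ↔ y • (⟨e, he⟩ : J) = 0 := by
        rw [← Subtype.coe_inj]; simp
      rw [t1, t2, ← hφa, ← LinearEquiv.map_smul φ, map_eq_zero_iff φ φ.injective]
    obtain ⟨b, hb⟩ := hP a e (fun y hy => (hiff y).1 hy)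
    have hea : e * (a : R) = a := by
      have := (hiff (1 - e)).2 (by rw [sub_mul, one_mul, hxe e he, sub_self])
      rw [sub_mul, one_mul] at this
      exact (sub_eq_zero.1 this).symm
    have hIa : ∀ x ∈ I, ∃ t, x = t * (a : R) := by
      intro x hx
      refine ⟨(φ ⟨x, hx⟩ : R), ?_⟩
      have : (⟨x, hx⟩ : I) = (φ ⟨x, hx⟩ : R) • a := by
        apply φ.injective
        rw [map_smul, hφa]
        apply Subtype.ext
        simp [hxe _ (φ ⟨x, hx⟩).2]
      exact congrArg Subtype.val this
    have haba : (a : R) * b * a = a := by rw [← hb, hea]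
    refine ⟨lAnnIdeal R {b * (a : R)}, ?_⟩
    rw [isCompl_iff, disjoint_iff, codisjoint_iff]
    constructor
    · rw [eq_bot_iff]
      rintro x ⟨hx, hx'⟩
      obtain ⟨t, rfl⟩ := hIa x hx
      have := hx' _ rfl
      rw [Submodule.mem_bot, ← haba, ← this]
      noncomm_ring
    · rw [Ideal.eq_top_iff_one]
      refine Submodule.mem_sup.2 ⟨b * (a : R), I.mul_mem_left _ a.2, 1 - b * (a : R), ?_, by abel⟩
      rintro _ rfl
      have : b * ((a : R) * b * a) = b * a := by rw [haba]
      calc (1 - b * (a : R)) * (b * a) = b * a - b * ((a : R) * b * a) := by noncomm_ring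
        _ = 0 := by rw [this, sub_self]
  · ext x
    constructor
    · intro hx L hL hbot
      apply hL
      rw [eq_bot_iff]
      intro b hbL
      obtain ⟨c, hc⟩ := hP (b * x) b (by
        intro y hy
        have : y * b ∈ lAnnIdeal R {x} ⊓ L := by
          refine ⟨?_, L.mul_mem_left y hbL⟩
          rintro _ rfl
          rw [mul_assoc, hy]
        rwa [hbot, Submodule.mem_bot] at this)
      obtain ⟨z, -, hz⟩ := sd_unit (sd_J_right hx c)
      have h0 : b * (1 - x * c) = 0 := by
        rw [mul_sub, mul_one, ← mul_assoc, ← hc, sub_self]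
      rw [Submodule.mem_bot]
      calc b = b * ((1 - x * c) * z) := by rw [hz, mul_one]
        _ = 0 := by rw [← mul_assoc, h0, zero_mul]
    · intro hx
      have hr : ∀ r, ∃ u, 1 = (1 - x * r) * u := by
        intro r
        apply hP
        intro y hy
        by_contra hne
        rw [mul_one] at hne
        refine hx (Ideal.span {y}) (by simpa [Ideal.span_singleton_eq_bot] using hne) ?_
        rw [eq_bot_iff]
        rintro w ⟨hw1, hw2⟩
        obtain ⟨t, rfl⟩ := Ideal.mem_span_singleton'.1 hw2
        have h1 : t * y * x = 0 := hw1 _ rfl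
        rw [Submodule.mem_bot]
        calc t * y = t * (y * (1 - x * r)) + t * y * x * r := by noncomm_ring
          _ = 0 := by rw [hy, h1]; simp
      refine Ideal.mem_jacobson_iff.2 fun y => ?_
      obtain ⟨u, hu⟩ := hr (-y)
      have hu' : u = 1 - x * (y * u) := by
        rw [hu]; noncomm_ring
      obtain ⟨w, hw⟩ := hr (y * u)
      rw [← hu'] at hw
      have hw2 : w = 1 - x * -y := by
        calc w = (1 - x * -y) * u * w := by rw [← hu, one_mul]
          _ = 1 - x * -y := by rw [mul_assoc, ← hw, mul_one]
      rw [hw2] at hw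
      refine ⟨1 - y * u * x, ?_⟩
      rw [Submodule.mem_bot]
      calc (1 - y * u * x) * y * x + (1 - y * u * x) - 1
          = y * (1 - u * (1 - x * -y)) * x := by noncomm_ring
        _ = 0 := by rw [← hw]; simp
end
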